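/- arXiv:1501.07767 — 3 statements merged into one kernel-verified Lean document; each statement's English description precedes it below -/
import Mathlib

section
/- There exist ρ* > 0, a constant K > 0, and functions e₁(x,ρ), e₂(x,ρ) defined for x ∈ [0,T] and ρ in the closed upper half-plane with |ρ| ≥ ρ*, such that: (i) for each such ρ, e₁(·,ρ) and e₂(·,ρ) are solutions of −y''+q y = ρ² y on [0,T] forming a fundamental system; (ii) for ν=0,1, the functions e₁^{(ν)}(x,·) and e₂^{(ν)}(x,·) are continuous in ρ on {Im ρ ≥ 0, |ρ| ≥ ρ*} and, for each fixed x, analytic in ρ on {Im ρ > 0, |ρ| > ρ*}; (iii) uniformly in x ∈ [0,T], |e₁^{(ν)}(x,ρ) − (iρ)^ν e^{iρx}| ≤ K|ρ|^{ν−1} e^{−τ x} and |e₂^{(ν)}(x,ρ) − (−iρ)^ν e^{−iρx}| ≤ K|ρ|^{ν−1} e^{τ x} for ν = 0,1, where τ = Im ρ. -/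
/-!
Put `Q = q` on `[0,T]` and `Q = 0` elsewhere. With `y = e^{-iρx} w`, variation of constants turns
`-y'' + q y = ρ² y` into the Volterra equation
`w(x) = 1 + (2iρ)⁻¹ ∫₀ˣ (e^{2iρ(x-t)} - 1) Q(t) w(t) dt`.
For `Im ρ ≥ 0` and `0 ≤ t ≤ x` the kernel is at most `2` in modulus, so for `|ρ| ≥ 2‖Q‖₁` the
`n`-th Neumann iterate is at most `2⁻ⁿ` (`norm_neu_le`), uniformly in `x` and `ρ`. The Neumann
series therefore converges to a solution `w` (`neuSum`, `neuSum_eq`) with `|w| ≤ 2`, and continuity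
and holomorphy in `ρ` pass from the iterates to the sum. The integral equation gives
`|w - 1| ≤ 2‖Q‖₁ / |ρ|`. Differentiating once,
`e₂' = e^{-iρx} (-iρ + ½ ∫₀ˣ (e^{2iρ(x-t)} + 1) Q w)`, which gives the second asymptotic formula.
That `e₂ = e^{-iρx} w` really solves the equation in integral form is the fundamental theorem of
calculus for absolutely continuous functions (`duhamel`). The outcome is `exists_growing_solution`.

The decaying solution `e₁` needs no separate construction: if `f` is the growing solution for the
reflected potential `q(T - ·)`, then `e₁(x,ρ) = e^{iρT} f(T - x, ρ)` (`SLSol.reflect`), and the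
factor `e^{iρT}` turns `e^{-iρ(T-x)}` into `e^{iρx}`. Finally the asymptotics show that the
Wronskian differs from `-2iρ` by less than `2|ρ|` once `|ρ| ≥ 4K + 1` (`wronskian_ne_zero`).
-/

open MeasureTheory Set Complex

/-- `SLSol q T lam y y'` means: on `[0,T]`, `y` and `y'` are absolutely continuous,
`y'` is the derivative of `y`, and `-y'' + q y = lam y` holds a.e., expressed in
the equivalent integral (Carathéodory) form. -/
def SLSol (q : ℝ → ℝ) (T : ℝ) (lam : ℂ) (y y' : ℝ → ℂ) : Prop :=
  (∀ x ∈ Icc (0:ℝ) T, y x = y 0 + ∫ t in (0:ℝ)..x, y' t) ∧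
  (∀ x ∈ Icc (0:ℝ) T, y' x = y' 0 + ∫ t in (0:ℝ)..x, ((q t : ℂ) - lam) * y t)

/-! ### Absolute continuity and variation of constants -/

lemma ac_const (c : ℂ) (a b : ℝ) : AbsolutelyContinuousOnInterval (fun _ : ℝ => c) a b :=
  (contDiff_const.contDiffOn (n := 1)).absolutelyContinuousOnInterval

/-- Indefinite integrals of complex-valued integrable functions are absolutely continuous, by
splitting into real and imaginary parts. -/
lemma ac_primitive {f : ℝ → ℂ} {a b : ℝ} (hf : IntervalIntegrable f volume a b) :
    AbsolutelyContinuousOnInterval (fun x => ∫ t in a..x, f t) a b := by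
  have hre : IntervalIntegrable (fun t => (f t).re) volume a b := ⟨hf.1.re, hf.2.re⟩
  have him : IntervalIntegrable (fun t => (f t).im) volume a b := ⟨hf.1.im, hf.2.im⟩
  have h1 := (hre.absolutelyContinuousOnInterval_intervalIntegral (c := a) (by simp)).fun_smul
    (ac_const 1 a b)
  have h2 := (him.absolutelyContinuousOnInterval_intervalIntegral (c := a) (by simp)).fun_smul
    (ac_const I a b)
  have h3 := h1.fun_add h2
  rw [absolutelyContinuousOnInterval_iff] at h3 ⊢
  intro ε hε
  obtain ⟨δ, hδ, H⟩ := h3 ε hε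
  refine ⟨δ, hδ, fun E hE hs => ?_⟩
  convert! H E hE hs using 1
  have key : ∀ x ∈ uIcc a b, ∫ t in a..x, f t =
      (∫ t in a..x, (f t).re) • (1 : ℂ) + (∫ t in a..x, (f t).im) • I := by
    intro x hx
    have hfx : IntervalIntegrable f volume a x := hf.mono_set (uIcc_subset_uIcc_left hx)
    have hc : (∫ t in a..x, f t) = ∫ t in a..x, ((((f t).re : ℝ) : ℂ) + ((f t).im : ℝ) * I) := by
      simp [re_add_im]
    rw [hc, intervalIntegral.integral_add, intervalIntegral.integral_mul_const,
      intervalIntegral.integral_ofReal, intervalIntegral.integral_ofReal]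
    · simp
    · exact ⟨hfx.1.re.ofReal, hfx.2.re.ofReal⟩
    · exact (show IntervalIntegrable (fun t => (((f t).im : ℝ) : ℂ)) volume a x from
        ⟨hfx.1.im.ofReal, hfx.2.im.ofReal⟩).mul_const I
  refine Finset.sum_congr rfl fun i hi => ?_
  have := hE.1 i hi
  rw [key _ this.1, key _ this.2]

/-- Fundamental theorem of calculus for a complex-valued absolutely continuous function whose
a.e. derivative is `g`. -/
lemma ac_ftc {f g : ℝ → ℂ} {a b : ℝ} (hf : AbsolutelyContinuousOnInterval f a b)
    (hg : IntervalIntegrable g volume a b)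
    (hd : ∀ᵐ x, x ∈ uIcc a b → HasDerivAt f (g x) x) :
    ∀ x ∈ uIcc a b, f x = f a + ∫ t in a..x, g t := by
  have hac := hf.fun_sub (ac_primitive hg)
  obtain ⟨C, hC⟩ := hac.const_of_ae_hasDerivAt_zero (by
    filter_upwards [hd, hg.ae_hasDerivAt_integral] with x h1 h2 hx
    simpa using (h1 hx).fun_sub (h2 hx a (by simp)))
  intro x hx
  have h1 := hC x hx
  have h2 := hC a (by simp)
  simp at h2
  rw [h2, ← h1]; ring

lemma ac_exp (c : ℂ) (a b : ℝ) :
    AbsolutelyContinuousOnInterval (fun x : ℝ => cexp (c * x)) a b := by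
  have : ContDiff ℝ 1 (fun x : ℝ => cexp (c * x)) :=
    (contDiff_const.mul ofRealCLM.contDiff).cexp
  exact this.contDiffOn.absolutelyContinuousOnInterval

lemma hasDerivAt_cexp_mul (c : ℂ) (x : ℝ) :
    HasDerivAt (fun x : ℝ => cexp (c * x)) (c * cexp (c * x)) x := by
  have h : HasDerivAt (fun x : ℝ => c * (x : ℂ)) c x := by
    simpa using (hasDerivAt_id x).ofReal_comp.const_mul c
  simpa [mul_comm] using h.cexp

/-- Variation of constants: the explicit `y` satisfies `y'' + ρ² y = e^{-iρx} g` in integral form,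
with derivative `y'`. With `g = Q w` and `y = e^{-iρx} w` this is the Sturm–Liouville equation. -/
lemma duhamel {ρ : ℂ} (hρ : ρ ≠ 0) {T : ℝ} (hT : 0 ≤ T) {g : ℝ → ℂ}
    (hg : IntervalIntegrable g volume 0 T) {y y' : ℝ → ℂ}
    (hy : ∀ x, y x = cexp (-(I * ρ) * x) + (cexp (I * ρ * x) *
      (∫ t in (0:ℝ)..x, cexp (-(2 * I * ρ) * t) * g t) -
      cexp (-(I * ρ) * x) * ∫ t in (0:ℝ)..x, g t) / (2 * I * ρ))
    (hy' : ∀ x, y' x = -(I * ρ) * cexp (-(I * ρ) * x) + (cexp (I * ρ * x) *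
      (∫ t in (0:ℝ)..x, cexp (-(2 * I * ρ) * t) * g t) +
      cexp (-(I * ρ) * x) * ∫ t in (0:ℝ)..x, g t) / 2) :
    ContinuousOn y (Icc 0 T) ∧ ContinuousOn y' (Icc 0 T) ∧
    (∀ x ∈ Icc 0 T, y x = y 0 + ∫ t in (0:ℝ)..x, y' t) ∧
    (∀ x ∈ Icc 0 T, y' x = y' 0 +
      ∫ t in (0:ℝ)..x, (cexp (-(I * ρ) * t) * g t - ρ ^ 2 * y t)) := by
  have cexpc : ∀ c : ℂ, Continuous fun x : ℝ => cexp (c * x) := fun c => by fun_prop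
  have hga : IntervalIntegrable (fun t : ℝ => cexp (-(2 * I * ρ) * t) * g t) volume 0 T :=
    hg.continuousOn_mul (cexpc _).continuousOn
  have hA := ac_primitive hga
  have hB := ac_primitive hg
  have hEA := (ac_exp (I * ρ) 0 T).fun_smul hA
  have hEB := (ac_exp (-(I * ρ)) 0 T).fun_smul hB
  have hyac : AbsolutelyContinuousOnInterval y 0 T := by
    rw [funext hy]
    have := (ac_exp (-(I * ρ)) 0 T).fun_add ((hEA.fun_sub hEB).const_smul (2 * I * ρ)⁻¹)
    simpa only [smul_eq_mul, div_eq_inv_mul] using this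
  have hyac' : AbsolutelyContinuousOnInterval y' 0 T := by
    rw [funext hy']
    have := ((ac_exp (-(I * ρ)) 0 T).const_smul (-(I * ρ))).fun_add
      ((hEA.fun_add hEB).const_smul (2:ℂ)⁻¹)
    simpa only [smul_eq_mul, div_eq_inv_mul] using this
  have hyc : ContinuousOn y (uIcc 0 T) := hyac.continuousOn
  have hyc' : ContinuousOn y' (uIcc 0 T) := hyac'.continuousOn
  have hexp : ∀ x : ℝ, cexp (-(2 * I * ρ) * x) * cexp (I * ρ * x) = cexp (-(I * ρ) * x) :=
    fun x => by rw [← Complex.exp_add]; congr 1; ring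
  have hI : (2 * I * ρ) ≠ 0 := by simp [hρ]
  have hI2 : I ^ 2 = -1 := I_sq
  have hd : ∀ᵐ x, x ∈ uIcc 0 T → HasDerivAt y (y' x) x := by
    filter_upwards [hga.ae_hasDerivAt_integral, hg.ae_hasDerivAt_integral] with x h1 h2 hx
    have e1 := h1 hx 0 (by simp)
    have e2 := h2 hx 0 (by simp)
    rw [funext hy]
    convert! (hasDerivAt_cexp_mul (-(I * ρ)) x).fun_add
      ((((hasDerivAt_cexp_mul (I * ρ) x).fun_mul e1).fun_sub
      ((hasDerivAt_cexp_mul (-(I * ρ)) x).fun_mul e2)).div_const (2 * I * ρ)) using 1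
    rw [hy', ← hexp]
    field_simp
    ring
  have hd' : ∀ᵐ x, x ∈ uIcc 0 T →
      HasDerivAt y' (cexp (-(I * ρ) * x) * g x - ρ ^ 2 * y x) x := by
    filter_upwards [hga.ae_hasDerivAt_integral, hg.ae_hasDerivAt_integral] with x h1 h2 hx
    have e1 := h1 hx 0 (by simp)
    have e2 := h2 hx 0 (by simp)
    rw [funext hy']
    convert! ((hasDerivAt_cexp_mul (-(I * ρ)) x).const_mul (-(I * ρ))).fun_add
      ((((hasDerivAt_cexp_mul (I * ρ) x).fun_mul e1).fun_add
      ((hasDerivAt_cexp_mul (-(I * ρ)) x).fun_mul e2)).div_const 2) using 1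
    rw [hy, ← hexp]
    field_simp
    ring_nf
    simp only [show I ^ 3 = -I by rw [pow_succ, I_sq]; ring, I_sq]
    ring
  have h1 := ac_ftc hyac hyc'.intervalIntegrable hd
  have h2 := ac_ftc hyac' ((hg.continuousOn_mul (cexpc (-(I * ρ))).continuousOn).sub
    (hyc.intervalIntegrable.const_mul (ρ ^ 2))) hd'
  rw [uIcc_of_le hT] at *
  exact ⟨hyc, hyc', h1, h2⟩

/-! ### Holomorphic dependence of integrals on a parameter -/

/-- An integral of holomorphic functions with a common integrable bound is holomorphic. No bound
on the derivative is assumed: Cauchy's estimate supplies one from the bound on `F`. -/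
lemma differentiableOn_integral_of_bounded {α : Type*} [MeasurableSpace α] {μ : Measure α}
    {U : Set ℂ} (hU : IsOpen U) {F : ℂ → α → ℂ} {bound : α → ℝ}
    (hmeas : ∀ ρ ∈ U, AEStronglyMeasurable (F ρ) μ)
    (hb : ∀ᵐ a ∂μ, ∀ ρ ∈ U, ‖F ρ a‖ ≤ bound a) (hbi : Integrable bound μ)
    (hd : ∀ᵐ a ∂μ, DifferentiableOn ℂ (fun ρ => F ρ a) U) :
    DifferentiableOn ℂ (fun ρ => ∫ a, F ρ a ∂μ) U := by
  intro ρ hρ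
  obtain ⟨r, hr, hball⟩ := Metric.isOpen_iff.1 hU ρ hρ
  have hsub : ∀ z ∈ Metric.ball ρ (r / 2), Metric.closedBall z (r / 3) ⊆ U := by
    intro z hz w hw
    apply hball
    rw [Metric.mem_ball] at hz ⊢
    rw [Metric.mem_closedBall] at hw
    linarith [dist_triangle w z ρ]
  -- The steps `r / (2(n+1))` give difference quotients, used for measurability of the derivative.
  have hlim : Filter.Tendsto (fun n : ℕ => ((r / 2 / ((n : ℝ) + 1) : ℝ) : ℂ)) Filter.atTop
      (nhdsWithin 0 {0}ᶜ) := by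
    rw [tendsto_nhdsWithin_iff]
    constructor
    · have h1 := (tendsto_one_div_add_atTop_nhds_zero_nat (𝕜 := ℝ)).const_mul (r / 2)
      have h2 := (continuous_ofReal.tendsto (r / 2 * 0)).comp h1
      simpa [Function.comp_def, div_eq_mul_inv] using h2
    · refine Filter.Eventually.of_forall fun n => ?_
      have : r / 2 / ((n : ℝ) + 1) ≠ 0 := by positivity
      simpa using ofReal_ne_zero.2 this
  have hmem : ∀ n : ℕ, ρ + ((r / 2 / ((n : ℝ) + 1) : ℝ) : ℂ) ∈ U := by
    intro n
    apply hball
    rw [Metric.mem_ball, dist_eq_norm, add_sub_cancel_left, norm_real, Real.norm_eq_abs,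
      abs_of_pos (by positivity)]
    have : r / 2 / ((n : ℝ) + 1) ≤ r / 2 := div_le_self (by positivity) (by simp)
    linarith
  refine DifferentiableAt.differentiableWithinAt ?_
  refine (hasDerivAt_integral_of_dominated_loc_of_deriv_le (μ := μ) (F := F)
    (F' := fun z a => deriv (fun ρ => F ρ a) z) (bound := fun a => bound a / (r / 3))
    (Metric.ball_mem_nhds ρ (half_pos hr)) ?_ ?_ ?_ ?_ (hbi.div_const _) ?_).2.differentiableAt
  · filter_upwards [hU.mem_nhds hρ] with z hz using hmeas z hz
  · exact hbi.mono' (hmeas ρ hρ) (hb.mono fun a ha => ha ρ hρ)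
  · refine aestronglyMeasurable_of_tendsto_ae Filter.atTop
      (f := fun (n : ℕ) a => ((r / 2 / ((n : ℝ) + 1) : ℝ) : ℂ)⁻¹ •
        (F (ρ + ((r / 2 / ((n : ℝ) + 1) : ℝ) : ℂ)) a - F ρ a))
      (fun n => ((hmeas _ (hmem n)).sub (hmeas ρ hρ)).fun_const_smul _) ?_
    filter_upwards [hd] with a ha
    have h := (ha.differentiableAt (hU.mem_nhds hρ)).hasDerivAt
    exact (hasDerivAt_iff_tendsto_slope_zero.1 h).comp hlim
  · filter_upwards [hb, hd] with a ha hda z hz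
    refine Complex.norm_deriv_le_of_forall_mem_sphere_norm_le (by positivity) ?_ ?_
    · refine DifferentiableOn.diffContOnCl ?_
      exact hda.mono (Metric.closure_ball_subset_closedBall.trans (hsub z hz))
    · exact fun w hw => ha w (hsub z hz (Metric.sphere_subset_closedBall hw))
  · filter_upwards [hd] with a ha z hz
    exact (ha.differentiableAt (hU.mem_nhds
      (hsub z hz (Metric.mem_closedBall_self (by positivity))))).hasDerivAt

/-! ### The Volterra operator -/

/-- The Volterra operator `∫₀ˣ (e^{2iρ(x-t)} + σ) Q(t) f(t,ρ) dt`. The value `σ = -1` occurs in the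
integral equation for `w`, and `σ = 1` in the formula for the derivative of `e^{-iρx} w`. -/
noncomputable def volt (Q : ℝ → ℂ) (σ : ℂ) (f : ℝ → ℂ → ℂ) (x : ℝ) (ρ : ℂ) : ℂ :=
  ∫ t in (0:ℝ)..x, (cexp (2 * I * ρ * (x - t)) + σ) * (Q t * f t ρ)

section volt
variable {Q : ℝ → ℂ} {σ : ℂ} {f : ℝ → ℂ → ℂ} {x B : ℝ} {ρ : ℂ} {S : Set ℂ}

lemma norm_kernel_le (hσ : ‖σ‖ ≤ 1) (hρ : 0 ≤ ρ.im) {s : ℝ} (hs : 0 ≤ s) :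
    ‖cexp (2 * I * ρ * s) + σ‖ ≤ 2 := by
  have h1 : ‖cexp (2 * I * ρ * s)‖ ≤ 1 := by
    rw [Complex.norm_exp, Real.exp_le_one_iff]
    simp
    positivity
  linarith [norm_add_le (cexp (2 * I * ρ * s)) σ]

lemma norm_volt_integrand_le (hσ : ‖σ‖ ≤ 1) (hρ : 0 ≤ ρ.im) {t : ℝ} (ht : t ∈ Ioc 0 x)
    (hf : ∀ t, 0 ≤ t → ‖f t ρ‖ ≤ B) :
    ‖(cexp (2 * I * ρ * (x - t)) + σ) * (Q t * f t ρ)‖ ≤ 2 * B * ‖Q t‖ := by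
  have h1 := norm_kernel_le hσ hρ (sub_nonneg.2 ht.2)
  have h2 := hf t ht.1.le
  push_cast at h1
  rw [norm_mul, norm_mul]
  calc _ ≤ 2 * (‖Q t‖ * B) := by gcongr
    _ = 2 * B * ‖Q t‖ := by ring

lemma norm_volt_le (hQ : Integrable Q) (hσ : ‖σ‖ ≤ 1) (hρ : 0 ≤ ρ.im) (hx : 0 ≤ x)
    (hB : 0 ≤ B) (hf : ∀ t, 0 ≤ t → ‖f t ρ‖ ≤ B) :
    ‖volt Q σ f x ρ‖ ≤ 2 * B * ∫ t, ‖Q t‖ := by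
  have h := intervalIntegral.norm_integral_le_of_norm_le hx
    (f := fun t => (cexp (2 * I * ρ * (x - t)) + σ) * (Q t * f t ρ))
    (g := fun t => 2 * B * ‖Q t‖) (μ := volume)
    (Filter.Eventually.of_forall fun t ht => norm_volt_integrand_le hσ hρ ht hf)
    (hQ.norm.const_mul _).intervalIntegrable
  refine h.trans ?_
  rw [intervalIntegral.integral_of_le hx, integral_const_mul]
  gcongr 2 * B * ?_
  exact setIntegral_le_integral hQ.norm (Filter.Eventually.of_forall fun _ => norm_nonneg _)

lemma intervalIntegrable_mul (hQ : Integrable Q) (hx : 0 ≤ x)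
    (hf : ContinuousOn (fun t => f t ρ) (Ici 0)) :
    IntervalIntegrable (fun t => Q t * f t ρ) volume 0 x :=
  hQ.intervalIntegrable.mul_continuousOn (hf.mono (by rw [uIcc_of_le hx]; exact Icc_subset_Ici_self))

lemma volt_integrand_meas (hQ : Integrable Q) (hx : 0 ≤ x)
    (hf : ContinuousOn (fun t => f t ρ) (Ici 0)) :
    AEStronglyMeasurable (fun t : ℝ => (cexp (2 * I * ρ * (x - t)) + σ) * (Q t * f t ρ))
      (volume.restrict (Ioc 0 x)) := by
  have := (intervalIntegrable_mul hQ hx hf).continuousOn_mul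
    (g := fun t : ℝ => cexp (2 * I * ρ * (x - t)) + σ) (by fun_prop)
  exact this.1.aestronglyMeasurable

/-- Separating the variables `x` and `t` in the kernel gives the form appearing in `duhamel`. -/
lemma volt_eq (hQ : Integrable Q) (hx : 0 ≤ x) (hf : ContinuousOn (fun t => f t ρ) (Ici 0)) :
    volt Q σ f x ρ = cexp (2 * I * ρ * x) *
      (∫ t in (0:ℝ)..x, cexp (-(2 * I * ρ) * t) * (Q t * f t ρ)) +
      σ * ∫ t in (0:ℝ)..x, Q t * f t ρ := by
  have hi := intervalIntegrable_mul hQ hx hf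
  rw [← intervalIntegral.integral_const_mul, ← intervalIntegral.integral_const_mul,
    ← intervalIntegral.integral_add, volt]
  · refine intervalIntegral.integral_congr fun t _ => ?_
    have h : cexp (2 * I * ρ * (x - t)) = cexp (2 * I * ρ * x) * cexp (-(2 * I * ρ) * t) := by
      rw [← Complex.exp_add]; ring_nf
    change _ * (Q t * f t ρ) = _ * (_ * (Q t * f t ρ)) + _ * (Q t * f t ρ)
    rw [h]; ring
  · exact (hi.continuousOn_mul (by fun_prop)).const_mul _
  · exact hi.const_mul _

lemma continuousOn_volt_left (hQ : Integrable Q) (hf : ContinuousOn (fun t => f t ρ) (Ici 0)) :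
    ContinuousOn (fun x => volt Q σ f x ρ) (Ici 0) := by
  refine ContinuousOn.congr ?_ (fun x hx => volt_eq hQ hx hf)
  have hloc : ∀ g : ℝ → ℂ, (∀ x, 0 ≤ x → IntervalIntegrable g volume 0 x) →
      ContinuousOn (fun x => ∫ t in (0:ℝ)..x, g t) (Ici 0) := by
    intro g hg x hx
    have hx1 : (0:ℝ) ≤ x + 1 := add_nonneg hx zero_le_one
    have h := intervalIntegral.continuousOn_primitive_interval'
      (hg (x + 1) hx1) (a := 0) (by simp)
    rw [uIcc_of_le hx1] at h
    refine (h x ⟨hx, by linarith⟩).mono_of_mem_nhdsWithin ?_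
    rw [← Ici_inter_Iic]
    exact Filter.inter_mem self_mem_nhdsWithin
      (mem_nhdsWithin_of_mem_nhds (Iic_mem_nhds (by linarith)))
  have hi := fun x hx => intervalIntegrable_mul (x := x) hQ hx hf
  have h1 := hloc _ hi
  have h2 := hloc (fun t => cexp (-(2 * I * ρ) * t) * (Q t * f t ρ))
    fun x hx => (hi x hx).continuousOn_mul (by fun_prop)
  have h3 : ContinuousOn (fun x : ℝ => cexp (2 * I * ρ * x)) (Ici 0) := by fun_prop
  exact (h3.mul h2).add (continuousOn_const.mul h1)

lemma continuousOn_volt_right (hQ : Integrable Q) (hσ : ‖σ‖ ≤ 1) (hS : ∀ ρ ∈ S, 0 ≤ ρ.im)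
    (hx : 0 ≤ x) (hf : ∀ ρ ∈ S, ContinuousOn (fun t => f t ρ) (Ici 0))
    (hb : ∀ ρ ∈ S, ∀ t, 0 ≤ t → ‖f t ρ‖ ≤ B)
    (hc : ∀ t, 0 ≤ t → ContinuousOn (f t) S) :
    ContinuousOn (volt Q σ f x) S := by
  unfold volt
  simp only [intervalIntegral.integral_of_le hx]
  refine continuousOn_of_dominated (bound := fun t => 2 * B * ‖Q t‖)
    (fun ρ hρ => volt_integrand_meas hQ hx (hf ρ hρ)) (fun ρ hρ => ?_)
    (hQ.norm.const_mul _).integrableOn ?_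
  · rw [ae_restrict_iff' measurableSet_Ioc]
    exact Filter.Eventually.of_forall fun t ht =>
      norm_volt_integrand_le hσ (hS ρ hρ) ht (hb ρ hρ)
  · rw [ae_restrict_iff' measurableSet_Ioc]
    refine Filter.Eventually.of_forall fun t ht => ?_
    have := hc t ht.1.le
    have h3 : ContinuousOn (fun ρ : ℂ => cexp (2 * I * ρ * (x - t)) + σ) S := by fun_prop
    exact h3.mul (continuousOn_const.mul this)

lemma differentiableOn_volt (hQ : Integrable Q) (hσ : ‖σ‖ ≤ 1) (hS : ∀ ρ ∈ S, 0 ≤ ρ.im)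
    (hSo : IsOpen S)
    (hx : 0 ≤ x) (hf : ∀ ρ ∈ S, ContinuousOn (fun t => f t ρ) (Ici 0))
    (hb : ∀ ρ ∈ S, ∀ t, 0 ≤ t → ‖f t ρ‖ ≤ B)
    (hc : ∀ t, 0 ≤ t → DifferentiableOn ℂ (f t) S) :
    DifferentiableOn ℂ (volt Q σ f x) S := by
  unfold volt
  simp only [intervalIntegral.integral_of_le hx]
  refine differentiableOn_integral_of_bounded hSo (bound := fun t => 2 * B * ‖Q t‖)
    (fun ρ hρ => volt_integrand_meas hQ hx (hf ρ hρ)) ?_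
    (hQ.norm.const_mul _).integrableOn ?_
  · rw [ae_restrict_iff' measurableSet_Ioc]
    exact Filter.Eventually.of_forall fun t ht ρ hρ =>
      norm_volt_integrand_le hσ (hS ρ hρ) ht (hb ρ hρ)
  · rw [ae_restrict_iff' measurableSet_Ioc]
    refine Filter.Eventually.of_forall fun t ht => ?_
    have := hc t ht.1.le
    have h3 : DifferentiableOn ℂ (fun ρ : ℂ => cexp (2 * I * ρ * (x - t)) + σ) S := by fun_prop
    exact h3.mul (this.const_mul (Q t))

end volt

/-! ### The Neumann series -/

/-- The Neumann iterates of `w = 1 + (2iρ)⁻¹ volt Q (-1) w`, starting from the constant `1`. -/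
noncomputable def neu (Q : ℝ → ℂ) : ℕ → ℝ → ℂ → ℂ
  | 0 => fun _ _ => 1
  | n + 1 => fun x ρ => volt Q (-1) (neu Q n) x ρ / (2 * I * ρ)

/-- The sum `w(x,ρ)` of the Neumann series. It is meaningful for `x ≥ 0`, `Im ρ ≥ 0` and
`|ρ| ≥ 2‖Q‖₁`, `ρ ≠ 0`, where the series converges. -/
noncomputable def neuSum (Q : ℝ → ℂ) (x : ℝ) (ρ : ℂ) : ℂ := ∑' n, neu Q n x ρ

section neu
variable {Q : ℝ → ℂ} {R x : ℝ} {ρ : ℂ}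

lemma neu_continuousOn (hQ : Integrable Q) (n : ℕ) (ρ : ℂ) :
    ContinuousOn (fun x => neu Q n x ρ) (Ici 0) := by
  induction n with
  | zero => exact continuousOn_const
  | succ n ih => exact (continuousOn_volt_left hQ ih).div_const _

/-- Each application of the Volterra operator gains a factor `2‖Q‖₁ / (2|ρ|) ≤ 1/2`. -/
lemma norm_neu_le (hQ : Integrable Q) (hR : 0 < R) (hQR : 2 * ∫ t, ‖Q t‖ ≤ R)
    (hρ : 0 ≤ ρ.im) (hρR : R ≤ ‖ρ‖) (n : ℕ) : ∀ x, 0 ≤ x → ‖neu Q n x ρ‖ ≤ (1 / 2) ^ n := by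
  induction n with
  | zero => simp [neu]
  | succ n ih =>
    intro x hx
    have h := norm_volt_le (σ := -1) hQ (by simp) hρ hx (by positivity) ih
    have hpos : 0 < ‖ρ‖ := hR.trans_le hρR
    simp only [neu, norm_div, norm_mul, Complex.norm_ofNat, norm_I, mul_one]
    rw [div_le_iff₀ (by positivity)]
    refine h.trans ?_
    rw [pow_succ]
    have : (0:ℝ) < (1 / 2) ^ n := by positivity
    nlinarith

lemma neuSum_hasSum (hQ : Integrable Q) (hR : 0 < R) (hQR : 2 * ∫ t, ‖Q t‖ ≤ R)
    (hρ : 0 ≤ ρ.im) (hρR : R ≤ ‖ρ‖) (hx : 0 ≤ x) :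
    HasSum (fun n => neu Q n x ρ) (neuSum Q x ρ) :=
  (Summable.of_norm_bounded summable_geometric_two
    fun n => norm_neu_le hQ hR hQR hρ hρR n x hx).hasSum

lemma norm_neuSum_le (hQ : Integrable Q) (hR : 0 < R) (hQR : 2 * ∫ t, ‖Q t‖ ≤ R)
    (hρ : 0 ≤ ρ.im) (hρR : R ≤ ‖ρ‖) (hx : 0 ≤ x) : ‖neuSum Q x ρ‖ ≤ 2 :=
  tsum_of_norm_bounded hasSum_geometric_two
    fun n => norm_neu_le hQ hR hQR hρ hρR n x hx

lemma neuSum_continuousOn_left (hQ : Integrable Q) (hR : 0 < R) (hQR : 2 * ∫ t, ‖Q t‖ ≤ R)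
    (hρ : 0 ≤ ρ.im) (hρR : R ≤ ‖ρ‖) : ContinuousOn (fun x => neuSum Q x ρ) (Ici 0) :=
  continuousOn_tsum (fun n => neu_continuousOn hQ n ρ) summable_geometric_two
    fun n x hx => norm_neu_le hQ hR hQR hρ hρR n x hx

/-- The integral equation for `w`; dominated convergence exchanges the sum and the integral. -/
lemma neuSum_eq (hQ : Integrable Q) (hR : 0 < R) (hQR : 2 * ∫ t, ‖Q t‖ ≤ R)
    (hρ : 0 ≤ ρ.im) (hρR : R ≤ ‖ρ‖) (hx : 0 ≤ x) :
    neuSum Q x ρ = 1 + volt Q (-1) (neuSum Q) x ρ / (2 * I * ρ) := by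
  have h1 := (hasSum_nat_add_iff' 1).2 (neuSum_hasSum hQ hR hQR hρ hρR hx)
  have h2 : HasSum (fun n => volt Q (-1) (neu Q n) x ρ) (volt Q (-1) (neuSum Q) x ρ) := by
    unfold volt
    refine intervalIntegral.hasSum_integral_of_dominated_convergence
      (fun n t => 2 * (1 / 2) ^ n * ‖Q t‖) ?_ ?_ ?_ ?_ ?_
    · intro n
      rw [uIoc_of_le hx]
      exact volt_integrand_meas hQ hx (neu_continuousOn hQ n ρ)
    · refine fun n => Filter.Eventually.of_forall fun t ht => ?_
      rw [uIoc_of_le hx] at ht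
      exact norm_volt_integrand_le (by simp) hρ ht (norm_neu_le hQ hR hQR hρ hρR n)
    · exact Filter.Eventually.of_forall fun t _ =>
        (summable_geometric_two.mul_left 2).mul_right _
    · simp only [tsum_mul_right]
      exact (hQ.norm.const_mul _).intervalIntegrable
    · refine Filter.Eventually.of_forall fun t ht => ?_
      rw [uIoc_of_le hx] at ht
      exact ((neuSum_hasSum hQ hR hQR hρ hρR ht.1.le).mul_left _).mul_left _
  have h3 := h1.unique (h2.div_const (2 * I * ρ))
  rw [← h3]
  simp [neu]

lemma neu_continuousOn_right (hQ : Integrable Q) (hR : 0 < R) (hQR : 2 * ∫ t, ‖Q t‖ ≤ R)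
    (n : ℕ) : ∀ x, 0 ≤ x → ContinuousOn (neu Q n x) {ρ : ℂ | 0 ≤ ρ.im ∧ R ≤ ‖ρ‖} := by
  induction n with
  | zero => exact fun _ _ => continuousOn_const
  | succ n ih =>
    intro x hx
    refine (continuousOn_volt_right (B := (1 / 2) ^ n) hQ (by simp) (fun ρ h => h.1) hx
      (fun ρ _ => neu_continuousOn hQ n ρ)
      (fun ρ h => norm_neu_le hQ hR hQR h.1 h.2 n) ih).div (by fun_prop) ?_
    intro ρ h
    have : ρ ≠ 0 := norm_pos_iff.1 (hR.trans_le h.2)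
    simp [this]

lemma neu_differentiableOn (hQ : Integrable Q) (hR : 0 < R) (hQR : 2 * ∫ t, ‖Q t‖ ≤ R)
    {U : Set ℂ} (hU : IsOpen U) (hUR : U ⊆ {ρ : ℂ | 0 ≤ ρ.im ∧ R ≤ ‖ρ‖})
    (n : ℕ) : ∀ x, 0 ≤ x → DifferentiableOn ℂ (neu Q n x) U := by
  induction n with
  | zero => exact fun _ _ => differentiableOn_const _
  | succ n ih =>
    intro x hx
    refine (differentiableOn_volt (B := (1 / 2) ^ n) hQ (by simp) (fun ρ h => (hUR h).1) hU hx
      (fun ρ _ => neu_continuousOn hQ n ρ)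
      (fun ρ h => norm_neu_le hQ hR hQR (hUR h).1 (hUR h).2 n) ih).div (by fun_prop) ?_
    intro ρ h
    have : ρ ≠ 0 := norm_pos_iff.1 (hR.trans_le (hUR h).2)
    simp [this]

lemma neuSum_continuousOn_right (hQ : Integrable Q) (hR : 0 < R) (hQR : 2 * ∫ t, ‖Q t‖ ≤ R)
    (hx : 0 ≤ x) : ContinuousOn (neuSum Q x) {ρ : ℂ | 0 ≤ ρ.im ∧ R ≤ ‖ρ‖} :=
  continuousOn_tsum (fun n => neu_continuousOn_right hQ hR hQR n x hx) summable_geometric_two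
    fun n _ h => norm_neu_le hQ hR hQR h.1 h.2 n x hx

lemma neuSum_differentiableOn (hQ : Integrable Q) (hR : 0 < R) (hQR : 2 * ∫ t, ‖Q t‖ ≤ R)
    {U : Set ℂ} (hU : IsOpen U) (hUR : U ⊆ {ρ : ℂ | 0 ≤ ρ.im ∧ R ≤ ‖ρ‖})
    (hx : 0 ≤ x) : DifferentiableOn ℂ (neuSum Q x) U :=
  differentiableOn_tsum_of_summable_norm summable_geometric_two
    (fun n => neu_differentiableOn hQ hR hQR hU hUR n x hx) hU
    fun n _ h => norm_neu_le hQ hR hQR (hUR h).1 (hUR h).2 n x hx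

end neu

/-! ### The growing solution, reflection, and the Wronskian -/

lemma norm_cexp_neg (ρ : ℂ) (x : ℝ) : ‖cexp (-(I * ρ) * x)‖ = Real.exp (ρ.im * x) := by
  rw [Complex.norm_exp]; simp

lemma norm_cexp_pos (ρ : ℂ) (x : ℝ) : ‖cexp (I * ρ * x)‖ = Real.exp (-ρ.im * x) := by
  rw [Complex.norm_exp]; simp

lemma isOpen_region (R : ℝ) : IsOpen {ρ : ℂ | 0 < ρ.im ∧ R < ‖ρ‖} :=
  (isOpen_lt continuous_const continuous_im).inter (isOpen_lt continuous_const continuous_norm)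

/-- The solution `e₂ = e^{-iρx} w` with its derivative, its regularity in `ρ` and its asymptotics.
The threshold `R` is left free above `C`, so that two applications of the lemma can share one
region of `ρ`. Continuity in `x` is recorded because `SLSol` alone does not provide the
integrability that `SLSol.reflect` needs. -/
lemma exists_growing_solution {T : ℝ} (hT : 0 < T) {q : ℝ → ℝ} (hq : IntegrableOn q (Icc 0 T)) :
    ∃ C : ℝ, 0 < C ∧ ∃ e e' : ℝ → ℂ → ℂ, ∀ R, C ≤ R →
      (∀ ρ : ℂ, 0 ≤ ρ.im → R ≤ ‖ρ‖ →
        SLSol q T (ρ ^ 2) (fun x => e x ρ) (fun x => e' x ρ) ∧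
        ContinuousOn (fun x => e x ρ) (Icc 0 T) ∧ ContinuousOn (fun x => e' x ρ) (Icc 0 T)) ∧
      (∀ x ∈ Icc (0:ℝ) T,
        ContinuousOn (fun ρ => e x ρ) {ρ : ℂ | 0 ≤ ρ.im ∧ R ≤ ‖ρ‖} ∧
        ContinuousOn (fun ρ => e' x ρ) {ρ : ℂ | 0 ≤ ρ.im ∧ R ≤ ‖ρ‖} ∧
        DifferentiableOn ℂ (fun ρ => e x ρ) {ρ : ℂ | 0 < ρ.im ∧ R < ‖ρ‖} ∧
        DifferentiableOn ℂ (fun ρ => e' x ρ) {ρ : ℂ | 0 < ρ.im ∧ R < ‖ρ‖}) ∧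
      (∀ ρ : ℂ, 0 ≤ ρ.im → R ≤ ‖ρ‖ → ∀ x ∈ Icc (0:ℝ) T,
        ‖e x ρ - cexp (-(I * ρ) * x)‖ ≤ C * ‖ρ‖⁻¹ * Real.exp (ρ.im * x) ∧
        ‖e' x ρ - (-(I * ρ)) * cexp (-(I * ρ) * x)‖ ≤ C * Real.exp (ρ.im * x)) := by
  obtain ⟨Q, hQdef⟩ : ∃ Q : ℝ → ℂ, Q = (Icc 0 T).indicator fun t => (q t : ℂ) := ⟨_, rfl⟩
  have hQ : Integrable Q := by
    rw [hQdef, integrable_indicator_iff measurableSet_Icc]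
    exact hq.ofReal
  have hQq : ∀ t ∈ Icc 0 T, Q t = q t := fun t ht => by rw [hQdef, indicator_of_mem ht]
  have hN : 0 ≤ ∫ t, ‖Q t‖ := integral_nonneg fun _ => norm_nonneg _
  -- `2‖Q‖₁` already bounds both remainders; the extra `1` keeps the constant positive when `q = 0`.
  refine ⟨2 * (∫ t, ‖Q t‖) + 1, by positivity,
    fun x ρ => cexp (-(I * ρ) * x) * neuSum Q x ρ,
    fun x ρ => cexp (-(I * ρ) * x) * (-(I * ρ) + volt Q 1 (neuSum Q) x ρ / 2), fun R hCR => ?_⟩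
  have hR : 0 < R := by linarith
  have hQR : 2 * (∫ t, ‖Q t‖) ≤ R := by linarith
  have hUS : {ρ : ℂ | 0 < ρ.im ∧ R < ‖ρ‖} ⊆ {ρ : ℂ | 0 ≤ ρ.im ∧ R ≤ ‖ρ‖} :=
    fun ρ h => ⟨h.1.le, h.2.le⟩
  refine ⟨fun ρ hρ hρR => ?_, fun x hx => ?_, fun ρ hρ hρR x hx => ?_⟩
  · have hρ0 : ρ ≠ 0 := norm_pos_iff.1 (hR.trans_le hρR)
    have hwc := neuSum_continuousOn_left hQ hR hQR hρ hρR
    have hexp : ∀ x : ℝ, cexp (I * ρ * x) = cexp (-(I * ρ) * x) * cexp (2 * I * ρ * x) :=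
      fun x => by rw [← Complex.exp_add]; congr 1; ring
    obtain ⟨c1, c2, s1, s2⟩ := duhamel hρ0 hT.le (intervalIntegrable_mul hQ hT.le hwc)
      (fun _ => rfl) (fun _ => rfl)
    have hy : EqOn (fun x : ℝ => cexp (-(I * ρ) * x) * neuSum Q x ρ) _ (Icc 0 T) := fun x hx => by
      change cexp (-(I * ρ) * x) * neuSum Q x ρ = cexp (-(I * ρ) * x) + (cexp (I * ρ * x) *
        (∫ t in (0:ℝ)..x, cexp (-(2 * I * ρ) * t) * (Q t * neuSum Q t ρ)) -
        cexp (-(I * ρ) * x) * ∫ t in (0:ℝ)..x, (Q t * neuSum Q t ρ)) / (2 * I * ρ)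
      rw [neuSum_eq hQ hR hQR hρ hρR hx.1, volt_eq hQ hx.1 hwc, hexp]
      ring
    have hy' : EqOn (fun x : ℝ => cexp (-(I * ρ) * x) *
        (-(I * ρ) + volt Q 1 (neuSum Q) x ρ / 2)) _ (Icc 0 T) := fun x hx => by
      change cexp (-(I * ρ) * x) * (-(I * ρ) + volt Q 1 (neuSum Q) x ρ / 2) =
        -(I * ρ) * cexp (-(I * ρ) * x) + (cexp (I * ρ * x) *
        (∫ t in (0:ℝ)..x, cexp (-(2 * I * ρ) * t) * (Q t * neuSum Q t ρ)) +
        cexp (-(I * ρ) * x) * ∫ t in (0:ℝ)..x, (Q t * neuSum Q t ρ)) / 2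
      rw [volt_eq hQ hx.1 hwc, hexp]
      ring
    have h0 : (0:ℝ) ∈ Icc 0 T := ⟨le_rfl, hT.le⟩
    have hsub : ∀ x ∈ Icc 0 T, uIcc 0 x ⊆ Icc 0 T := fun x hx => by
      rw [uIcc_of_le hx.1]; exact Icc_subset_Icc_right hx.2
    refine ⟨⟨fun x hx => ?_, fun x hx => ?_⟩, c1.congr hy, c2.congr hy'⟩
    · rw [hy hx, hy h0, s1 x hx]
      congr 1
      exact intervalIntegral.integral_congr fun t ht => (hy' (hsub x hx ht)).symm
    · rw [hy' hx, hy' h0, s2 x hx]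
      congr 1
      refine intervalIntegral.integral_congr fun t ht => ?_
      have ht' := hsub x hx ht
      have e1 := hy ht'
      beta_reduce at e1
      change _ - _ * _ = ((q t : ℂ) - ρ ^ 2) * (cexp (-(I * ρ) * t) * neuSum Q t ρ)
      rw [← e1, ← hQq t ht']
      ring
  · have hB := fun ρ (h : ρ ∈ {ρ : ℂ | 0 ≤ ρ.im ∧ R ≤ ‖ρ‖}) t (ht : 0 ≤ t) =>
      norm_neuSum_le hQ hR hQR h.1 h.2 ht
    have hl := fun ρ (h : ρ ∈ {ρ : ℂ | 0 ≤ ρ.im ∧ R ≤ ‖ρ‖}) =>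
      neuSum_continuousOn_left hQ hR hQR h.1 h.2
    have hr := fun t (ht : 0 ≤ t) => neuSum_continuousOn_right hQ hR hQR ht
    have hd := fun t (ht : 0 ≤ t) => neuSum_differentiableOn hQ hR hQR (isOpen_region R) hUS ht
    have hvc := continuousOn_volt_right (σ := 1) hQ (by simp) (fun ρ h => h.1) hx.1 hl hB hr
    have hvd := differentiableOn_volt (σ := 1) hQ (by simp) (fun ρ h => (hUS h).1)
      (isOpen_region R) hx.1 (fun ρ h => hl ρ (hUS h)) (fun ρ h => hB ρ (hUS h)) hd
    refine ⟨?_, ?_, ?_, ?_⟩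
    · exact ContinuousOn.mul (by fun_prop) (hr x hx.1)
    · exact ContinuousOn.mul (by fun_prop) (ContinuousOn.add (by fun_prop) (hvc.div_const 2))
    · exact DifferentiableOn.mul (by fun_prop) (hd x hx.1)
    · exact DifferentiableOn.mul (by fun_prop)
        (DifferentiableOn.add (by fun_prop) (hvd.div_const 2))
  · have hb := fun t (ht : 0 ≤ t) => norm_neuSum_le hQ hR hQR hρ hρR ht
    have hpos : 0 < ‖ρ‖ := hR.trans_le hρR
    have hE := norm_cexp_neg ρ x
    constructor
    · have h := norm_volt_le (σ := -1) hQ (by simp) hρ hx.1 zero_le_two hb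
      have : cexp (-(I * ρ) * x) * neuSum Q x ρ - cexp (-(I * ρ) * x) =
          volt Q (-1) (neuSum Q) x ρ / (2 * I * ρ) * cexp (-(I * ρ) * x) := by
        rw [neuSum_eq hQ hR hQR hρ hρR hx.1]; ring
      simp only [this]
      rw [norm_mul, hE]
      gcongr
      rw [norm_div, ← div_eq_mul_inv]
      simp only [norm_mul, Complex.norm_ofNat, norm_I, mul_one]
      rw [div_le_div_iff₀ (by positivity) hpos]
      nlinarith
    · have h := norm_volt_le (σ := 1) hQ (by simp) hρ hx.1 zero_le_two hb
      have : cexp (-(I * ρ) * x) * (-(I * ρ) + volt Q 1 (neuSum Q) x ρ / 2) -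
          (-(I * ρ)) * cexp (-(I * ρ) * x) =
          volt Q 1 (neuSum Q) x ρ / 2 * cexp (-(I * ρ) * x) := by ring
      simp only [this]
      rw [norm_mul, hE]
      gcongr
      rw [norm_div, Complex.norm_ofNat]
      linarith

/-- If `y` solves the equation with potential `q(T - ·)`, then `x ↦ c y(T - x)` solves it with
potential `q`. -/
lemma SLSol.reflect {q : ℝ → ℝ} {T : ℝ} {lam : ℂ} {y y' : ℝ → ℂ} (hT : 0 ≤ T)
    (hq : IntegrableOn q (Icc 0 T))
    (h : SLSol (fun x => q (T - x)) T lam y y') (hy : ContinuousOn y (Icc 0 T))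
    (hy' : ContinuousOn y' (Icc 0 T)) (c : ℂ) :
    SLSol q T lam (fun x => c * y (T - x)) (fun x => -c * y' (T - x)) := by
  have hTm : T ∈ Icc 0 T := ⟨hT, le_rfl⟩
  have hsub : ∀ x ∈ Icc 0 T, T - x ∈ Icc 0 T := fun x hx => ⟨by linarith [hx.2], by linarith [hx.1]⟩
  have hqi : IntervalIntegrable (fun x => ((q (T - x) : ℂ) - lam) * y x) volume 0 T := by
    have h1 : IntervalIntegrable q volume 0 T := by
      rw [intervalIntegrable_iff_integrableOn_Icc_of_le hT]; exact hq
    have h2 : IntervalIntegrable (fun x => q (T - x)) volume 0 T := by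
      simpa using (h1.comp_sub_left T).symm
    have h3 : IntervalIntegrable (fun x => (q (T - x) : ℂ)) volume 0 T :=
      ⟨h2.1.ofReal, h2.2.ofReal⟩
    exact (h3.sub intervalIntegrable_const).mul_continuousOn (by rwa [uIcc_of_le hT])
  have hyi : IntervalIntegrable y' volume 0 T :=
    ContinuousOn.intervalIntegrable (by rwa [uIcc_of_le hT])
  have key : ∀ g : ℝ → ℂ, IntervalIntegrable g volume 0 T → ∀ x ∈ Icc 0 T,
      ∫ t in (0:ℝ)..x, g (T - t) = (∫ t in (0:ℝ)..T, g t) - ∫ t in (0:ℝ)..(T - x), g t := by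
    intro g hg x hx
    rw [intervalIntegral.integral_comp_sub_left, sub_zero,
      intervalIntegral.integral_interval_sub_left hg]
    refine hg.mono_set ?_
    rw [uIcc_of_le hT, uIcc_of_le (hsub x hx).1]
    exact Icc_subset_Icc_right (hsub x hx).2
  constructor
  · intro x hx
    have e1 := h.1 _ (hsub x hx)
    have e2 := h.1 _ hTm
    simp only [sub_zero]
    rw [intervalIntegral.integral_const_mul, key _ hyi x hx, e1, e2]
    ring
  · intro x hx
    have e1 := h.2 _ (hsub x hx)
    have e2 := h.2 _ hTm
    simp only [sub_zero]
    have e3 := key _ hqi x hx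
    simp only [sub_sub_cancel] at e3
    have e4 : ∀ t, ((q t : ℂ) - lam) * (c * y (T - t)) = c * (((q t : ℂ) - lam) * y (T - t)) :=
      fun t => by ring
    simp only [e4]
    rw [intervalIntegral.integral_const_mul, e3, e1, e2]
    ring

/-- Pointwise form of the Wronskian estimate: here `u` and `v` are the values of `e^{iρx}` and
`e^{-iρx}`, and `a, a', b, b'` those of `e₁, e₁', e₂, e₂'`. -/
lemma wronskian_ne_zero {ρ u v a a' b b' : ℂ} {K : ℝ} (hK : 0 < K) (hρ : 4 * K + 1 ≤ ‖ρ‖)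
    (huv : u * v = 1)
    (ha : ‖a - u‖ ≤ K * ‖ρ‖⁻¹ * ‖u‖) (ha' : ‖a' - I * ρ * u‖ ≤ K * ‖u‖)
    (hb : ‖b - v‖ ≤ K * ‖ρ‖⁻¹ * ‖v‖) (hb' : ‖b' - -(I * ρ) * v‖ ≤ K * ‖v‖) :
    a * b' - a' * b ≠ 0 := by
  intro h0
  have hpos : 0 < ‖ρ‖ := by linarith
  have hn : ‖u‖ * ‖v‖ = 1 := by rw [← norm_mul, huv, norm_one]
  -- Expand the Wronskian around its leading part `u (-iρ v) - (iρ u) v = -2iρ`; if it vanishes,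
  -- `2iρ` equals the sum of the remainder terms, whose norm is at most `2K²/|ρ| + 4K < 2|ρ|`.
  have hid : 2 * (I * ρ) = (a - u) * (b' - -(I * ρ) * v) - (a - u) * (I * ρ * v)
      + u * (b' - -(I * ρ) * v) - (a' - I * ρ * u) * (b - v) - (a' - I * ρ * u) * v
      - I * ρ * u * (b - v) := by
    linear_combination (-h0) - 2 * (I * ρ) * huv
  have hnorm : 2 * ‖ρ‖ ≤ ‖a - u‖ * ‖b' - -(I * ρ) * v‖ + ‖a - u‖ * (‖ρ‖ * ‖v‖)
      + ‖u‖ * ‖b' - -(I * ρ) * v‖ + ‖a' - I * ρ * u‖ * ‖b - v‖ + ‖a' - I * ρ * u‖ * ‖v‖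
      + ‖ρ‖ * ‖u‖ * ‖b - v‖ := by
    have : 2 * ‖ρ‖ = ‖2 * (I * ρ)‖ := by simp
    rw [this, hid]
    refine (norm_sub_le _ _).trans ?_
    refine add_le_add ((norm_sub_le _ _).trans ?_) (by simp)
    refine add_le_add ((norm_sub_le _ _).trans ?_) (by simp)
    refine add_le_add ((norm_add_le _ _).trans ?_) (by simp)
    refine add_le_add ((norm_sub_le _ _).trans ?_) (by simp)
    exact add_le_add (by simp) (by simp)
  have hbound : 2 * ‖ρ‖ ≤ K * ‖ρ‖⁻¹ * ‖u‖ * (K * ‖v‖) + K * ‖ρ‖⁻¹ * ‖u‖ * (‖ρ‖ * ‖v‖)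
      + ‖u‖ * (K * ‖v‖) + K * ‖u‖ * (K * ‖ρ‖⁻¹ * ‖v‖) + K * ‖u‖ * ‖v‖
      + ‖ρ‖ * ‖u‖ * (K * ‖ρ‖⁻¹ * ‖v‖) := by
    refine hnorm.trans ?_
    gcongr
  have hsum : K * ‖ρ‖⁻¹ * ‖u‖ * (K * ‖v‖) + K * ‖ρ‖⁻¹ * ‖u‖ * (‖ρ‖ * ‖v‖)
      + ‖u‖ * (K * ‖v‖) + K * ‖u‖ * (K * ‖ρ‖⁻¹ * ‖v‖) + K * ‖u‖ * ‖v‖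
      + ‖ρ‖ * ‖u‖ * (K * ‖ρ‖⁻¹ * ‖v‖) = 2 * K * (K * ‖ρ‖⁻¹) + 4 * K := by
    have hr : ‖ρ‖ * ‖ρ‖⁻¹ = 1 := mul_inv_cancel₀ hpos.ne'
    linear_combination (2 * K * (K * ‖ρ‖⁻¹) + 2 * K + 2 * K * (‖ρ‖ * ‖ρ‖⁻¹)) * hn + 2 * K * hr
  have hsmall : K * ‖ρ‖⁻¹ ≤ 1 := by
    rw [← div_eq_mul_inv, div_le_one hpos]; linarith
  nlinarith

/-- existence of a Birkhoff-type fundamental system `e₁(x,ρ)`, `e₂(x,ρ)`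
for `-y'' + q y = ρ² y`, defined for `Im ρ ≥ 0`, `|ρ| ≥ ρ*`, continuous and analytic
in `ρ`, with the asymptotics `e₁^{(ν)}(x,ρ) = (iρ)^ν e^{iρx}[1]`,
`e₂^{(ν)}(x,ρ) = (-iρ)^ν e^{-iρx}[1]` uniformly in `x ∈ [0,T]`. -/
theorem birkhoff_fundamental_system
    (T : ℝ) (hT : 0 < T) (q : ℝ → ℝ) (hq : IntegrableOn q (Icc 0 T)) :
    ∃ (ρstar K : ℝ), 0 < ρstar ∧ 0 < K ∧
      ∃ e₁ e₁' e₂ e₂' : ℝ → ℂ → ℂ,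
        (∀ ρ : ℂ, 0 ≤ ρ.im → ρstar ≤ ‖ρ‖ →
          -- (i) solutions forming a fundamental system
          SLSol q T (ρ ^ 2) (fun x => e₁ x ρ) (fun x => e₁' x ρ) ∧
          SLSol q T (ρ ^ 2) (fun x => e₂ x ρ) (fun x => e₂' x ρ) ∧
          (∀ x ∈ Icc (0:ℝ) T, e₁ x ρ * e₂' x ρ - e₁' x ρ * e₂ x ρ ≠ 0)) ∧
        -- (ii) continuity and analyticity in ρ
        (∀ x ∈ Icc (0:ℝ) T,
          ContinuousOn (fun ρ => e₁ x ρ) {ρ : ℂ | 0 ≤ ρ.im ∧ ρstar ≤ ‖ρ‖} ∧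
          ContinuousOn (fun ρ => e₁' x ρ) {ρ : ℂ | 0 ≤ ρ.im ∧ ρstar ≤ ‖ρ‖} ∧
          ContinuousOn (fun ρ => e₂ x ρ) {ρ : ℂ | 0 ≤ ρ.im ∧ ρstar ≤ ‖ρ‖} ∧
          ContinuousOn (fun ρ => e₂' x ρ) {ρ : ℂ | 0 ≤ ρ.im ∧ ρstar ≤ ‖ρ‖} ∧
          AnalyticOnNhd ℂ (fun ρ => e₁ x ρ) {ρ : ℂ | 0 < ρ.im ∧ ρstar < ‖ρ‖} ∧
          AnalyticOnNhd ℂ (fun ρ => e₁' x ρ) {ρ : ℂ | 0 < ρ.im ∧ ρstar < ‖ρ‖} ∧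
          AnalyticOnNhd ℂ (fun ρ => e₂ x ρ) {ρ : ℂ | 0 < ρ.im ∧ ρstar < ‖ρ‖} ∧
          AnalyticOnNhd ℂ (fun ρ => e₂' x ρ) {ρ : ℂ | 0 < ρ.im ∧ ρstar < ‖ρ‖}) ∧
        -- (iii) asymptotics, uniform in x ∈ [0,T]
        (∀ ρ : ℂ, 0 ≤ ρ.im → ρstar ≤ ‖ρ‖ → ∀ x ∈ Icc (0:ℝ) T,
          ‖e₁ x ρ - Complex.exp (I * ρ * x)‖ ≤ K * ‖ρ‖⁻¹ * Real.exp (-ρ.im * x) ∧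
          ‖e₁' x ρ - (I * ρ) * Complex.exp (I * ρ * x)‖ ≤ K * Real.exp (-ρ.im * x) ∧
          ‖e₂ x ρ - Complex.exp (-(I * ρ) * x)‖ ≤ K * ‖ρ‖⁻¹ * Real.exp (ρ.im * x) ∧
          ‖e₂' x ρ - (-(I * ρ)) * Complex.exp (-(I * ρ) * x)‖ ≤ K * Real.exp (ρ.im * x)) := by
  obtain ⟨C₂, hC₂, e₂, e₂', H₂⟩ := exists_growing_solution hT hq
  have hqr : IntegrableOn (fun x => q (T - x)) (Icc 0 T) := by
    rw [← intervalIntegrable_iff_integrableOn_Icc_of_le hT.le] at hq ⊢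
    simpa using (hq.comp_sub_left T).symm
  obtain ⟨C₁, hC₁, f, f', H₁⟩ := exists_growing_solution hT hqr
  obtain ⟨K, hK₁, hK₂⟩ : ∃ K, C₁ ≤ K ∧ C₂ ≤ K := ⟨max C₁ C₂, le_max_left _ _, le_max_right _ _⟩
  have hK : 0 < K := hC₁.trans_le hK₁
  -- `4K + 1` is the threshold required by `wronskian_ne_zero`.
  obtain ⟨S₁, D₁, B₁⟩ := H₁ (4 * K + 1) (by linarith)
  obtain ⟨S₂, D₂, B₂⟩ := H₂ (4 * K + 1) (by linarith)
  have hsub : ∀ x ∈ Icc 0 T, T - x ∈ Icc 0 T := fun x hx => ⟨by linarith [hx.2], by linarith [hx.1]⟩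
  have asym : ∀ ρ : ℂ, 0 ≤ ρ.im → 4 * K + 1 ≤ ‖ρ‖ → ∀ x ∈ Icc (0:ℝ) T,
      ‖cexp (I * ρ * T) * f (T - x) ρ - cexp (I * ρ * x)‖ ≤
        K * ‖ρ‖⁻¹ * Real.exp (-ρ.im * x) ∧
      ‖-cexp (I * ρ * T) * f' (T - x) ρ - (I * ρ) * cexp (I * ρ * x)‖ ≤
        K * Real.exp (-ρ.im * x) ∧
      ‖e₂ x ρ - cexp (-(I * ρ) * x)‖ ≤ K * ‖ρ‖⁻¹ * Real.exp (ρ.im * x) ∧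
      ‖e₂' x ρ - (-(I * ρ)) * cexp (-(I * ρ) * x)‖ ≤ K * Real.exp (ρ.im * x) := by
    intro ρ hρ hρR x hx
    obtain ⟨b1, b2⟩ := B₁ ρ hρ hρR (T - x) (hsub x hx)
    obtain ⟨b3, b4⟩ := B₂ ρ hρ hρR x hx
    have hE : cexp (I * ρ * x) = cexp (I * ρ * T) * cexp (-(I * ρ) * ((T - x : ℝ) : ℂ)) := by
      rw [← Complex.exp_add]; congr 1; push_cast; ring
    have hR : Real.exp (-ρ.im * x) = Real.exp (-ρ.im * T) * Real.exp (ρ.im * (T - x)) := by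
      rw [← Real.exp_add]; congr 1; ring
    refine ⟨?_, ?_, b3.trans (by gcongr), b4.trans (by gcongr)⟩
    · rw [hE, ← mul_sub, norm_mul, norm_cexp_pos, hR]
      calc _ ≤ Real.exp (-ρ.im * T) * (C₁ * ‖ρ‖⁻¹ * Real.exp (ρ.im * (T - x))) := by gcongr
        _ ≤ Real.exp (-ρ.im * T) * (K * ‖ρ‖⁻¹ * Real.exp (ρ.im * (T - x))) := by gcongr
        _ = _ := by ring
    · have : -cexp (I * ρ * T) * f' (T - x) ρ - (I * ρ) * cexp (I * ρ * x) = -cexp (I * ρ * T) *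
          (f' (T - x) ρ - -(I * ρ) * cexp (-(I * ρ) * ((T - x : ℝ) : ℂ))) := by
        rw [hE]; ring
      rw [this, norm_mul, norm_neg, norm_cexp_pos, hR]
      calc _ ≤ Real.exp (-ρ.im * T) * (C₁ * Real.exp (ρ.im * (T - x))) := by gcongr
        _ ≤ Real.exp (-ρ.im * T) * (K * Real.exp (ρ.im * (T - x))) := by gcongr
        _ = _ := by ring
  refine ⟨4 * K + 1, K, by linarith, hK, fun x ρ => cexp (I * ρ * T) * f (T - x) ρ,
    fun x ρ => -cexp (I * ρ * T) * f' (T - x) ρ, e₂, e₂', fun ρ hρ hρR => ⟨?_, ?_, ?_⟩,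
    fun x hx => ?_, asym⟩
  · obtain ⟨s, c, c'⟩ := S₁ ρ hρ hρR
    exact s.reflect hT.le hq c c' _
  · exact (S₂ ρ hρ hρR).1
  · intro x hx
    obtain ⟨b1, b2, b3, b4⟩ := asym ρ hρ hρR x hx
    rw [← norm_cexp_pos] at b1 b2
    rw [← norm_cexp_neg] at b3 b4
    refine wronskian_ne_zero hK hρR ?_ b1 b2 b3 b4
    rw [← Complex.exp_add, ← Complex.exp_zero]; congr 1; ring
  · obtain ⟨c1, c2, d1, d2⟩ := D₁ _ (hsub x hx)
    obtain ⟨c3, c4, d3, d4⟩ := D₂ x hx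
    have hU := isOpen_region (4 * K + 1)
    refine ⟨?_, ?_, c3, c4, ?_, ?_, (analyticOnNhd_iff_differentiableOn hU).2 d3,
      (analyticOnNhd_iff_differentiableOn hU).2 d4⟩
    · exact ContinuousOn.mul (by fun_prop) c1
    · exact ContinuousOn.mul (by fun_prop) c2
    · exact (analyticOnNhd_iff_differentiableOn hU).2 (DifferentiableOn.mul (by fun_prop) d1)
    · exact (analyticOnNhd_iff_differentiableOn hU).2 (DifferentiableOn.mul (by fun_prop) d2)
end

section
/- Let f be an entire function such that |f(λ)| ≤ A·exp(A·|λ|^{1/2}) for all λ ∈ ℂ and some A > 0. Suppose that for some θ with 0 < θ < π, f is bounded on the sector {λ ∈ ℂ \ {0} : θ ≤ |arg λ| ≤ π}, and that f(λ) → c as λ → −∞ along the negative real axis. Then f(λ) = c for all λ ∈ ℂ. -/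
/-!
The substitution `z = exp w` turns the sector `|arg z| ≤ θ` into the horizontal strip
`|Im w| ≤ θ` of width `2θ`, on whose boundary `f ∘ exp` is bounded by the sector hypothesis. Since
`‖f (exp w)‖ ≤ A exp (A exp (Re w / 2))` and `1 / 2 < π / (2θ)`, the Phragmén–Lindelöf principle
(`PhragmenLindelof.horizontal_strip`) bounds `f` on `|arg z| ≤ θ` as well. So `f` is a bounded
entire function, hence constant by Liouville, and the constant is the limit `c`.
-/

open Filter Complex

/-- an entire function of growth order at most 1/2 which is bounded on
the sector {θ ≤ |arg λ| ≤ π} (0 < θ < π) and tends to c along the negative real axis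
is identically equal to c. -/
theorem entire_order_half_bounded_on_sector_const
    (f : ℂ → ℂ) (hf : Differentiable ℂ f)
    (A : ℝ) (hA : 0 < A)
    (hgrowth : ∀ z : ℂ, ‖f z‖ ≤ A * Real.exp (A * Real.sqrt ‖z‖))
    (θ : ℝ) (hθ0 : 0 < θ) (hθπ : θ < Real.pi)
    (hsector : ∃ M : ℝ, ∀ z : ℂ, z ≠ 0 → θ ≤ |arg z| → |arg z| ≤ Real.pi → ‖f z‖ ≤ M)
    (c : ℂ) (hlim : Tendsto (fun t : ℝ => f (t : ℂ)) atBot (nhds c)) :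
    ∀ z : ℂ, f z = c := by
  obtain ⟨M, hM⟩ := hsector
  have hbdry : ∀ w : ℂ, |w.im| = θ → ‖f (exp w)‖ ≤ M := by
    intro w hw
    have hw' := abs_le.1 hw.le
    have harg : arg (exp w) = w.im := by
      rw [arg_exp, toIocMod_eq_self]
      constructor <;> linarith [hw'.1, hw'.2]
    refine hM _ (exp_ne_zero w) ?_ ?_ <;> rw [harg, hw]
    exact hθπ.le
  have hstrip : ∀ w : ℂ, |w.im| ≤ θ → ‖f (exp w)‖ ≤ M := by
    intro w hw
    refine PhragmenLindelof.horizontal_strip (f := fun w => f (exp w)) (a := -θ) (b := θ)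
      (hf.comp differentiable_exp).diffContOnCl ⟨1 / 2, ?_, A, ?_⟩
      (fun w hw => hbdry w (by rw [hw, abs_neg, abs_of_pos hθ0]))
      (fun w hw => hbdry w (by rw [hw, abs_of_pos hθ0])) (abs_le.1 hw).1 (abs_le.1 hw).2
    · rw [lt_div_iff₀ (by linarith)]
      linarith
    · refine Asymptotics.IsBigO.of_bound A (Eventually.of_forall fun w => ?_)
      refine (hgrowth _).trans ?_
      rw [Real.norm_eq_abs, Real.abs_exp, norm_exp, Real.sqrt_eq_rpow, ← Real.exp_mul,
        mul_comm w.re]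
      gcongr
      exact le_abs_self w.re
  have hbound : ∀ z : ℂ, ‖f z‖ ≤ max M ‖f 0‖ := by
    intro z
    rcases eq_or_ne z 0 with rfl | hz
    · exact le_max_right _ _
    refine le_trans ?_ (le_max_left _ _)
    rcases le_total θ |arg z| with h | h
    · exact hM z hz h (abs_arg_le_pi z)
    · rw [← exp_log hz]
      exact hstrip _ (by rwa [log_im])
  have hconst : ∀ z w : ℂ, f z = f w := fun z w =>
    hf.apply_eq_apply_of_bounded
      (isBounded_iff_forall_norm_le.2 ⟨_, Set.forall_mem_range.2 hbound⟩) z w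
  intro z
  refine tendsto_nhds_unique ?_ hlim
  simp only [fun t : ℝ => hconst t z]
  exact tendsto_const_nhds
end

section
/- A number λ ∈ ℂ is an eigenvalue of the quasi-periodic boundary value problem B — i.e., there exists a not identically zero function y on [0,T] which on each subinterval [b_{j−1}, b_j] has y, y' absolutely continuous and satisfies −y''+q y = λ y a.e., satisfies the discontinuity conditions, and satisfies the quasi-periodic boundary conditions y(0) = α·y(T) and y'(0) − h·y(0) = β·y'(T) — if and only if a(λ) = 0, where a(λ) = α·φ(T,λ) + β·S'(T,λ) − (1 + αβ). -/
/-!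
Every solution of the problem with jumps is `y = c C + d S` with `c = y(0)`, `d = y'(0)`, so an
eigenfunction exists exactly when the boundary conditions, a homogeneous linear system in `(c, d)`,
have a nontrivial solution. The determinant of this system is
`(1 - α C(T)) (1 - β S'(T)) - α S(T) (h + β C'(T))`, and since the Wronskian `C S' - C' S` equals
`1` at `T`, this determinant is `-a(λ)`.

On one subinterval the equation is treated as the integrated system `u' = v`, `v' = p u` with
`p = q - λ` integrable (`IsPiece`). Uniqueness follows from a Gronwall inequality with integrable
kernel (`gronwall_integrable`, `IsPiece.eq_zero`), and constancy of the Wronskian from the fact that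
an absolutely continuous function with almost everywhere vanishing derivative is constant
(`IsPiece.wronskian_eq`). Both carry over to the piecewise problem because the jump conditions are
linear with a matrix of determinant `1`.

The definition of a solution by integral equations does not assume that the integrands are
integrable, and the Bochner integral of a non-integrable function is set to `0`. That integrability nevertheless
holds, so that solutions are genuinely absolutely continuous, is `IsPiece.continuousOn`.
-/

open MeasureTheory Set

/-- `PiecewiseSLSol q N b γ η lam y y'` : the family of pieces `y j` (with
derivatives `y' j`), `j = 1,…,N`, solves `-y'' + q y = lam y` on each subinterval
`[b (j-1), b j]` with the discontinuity (jump) conditions at the interior points. -/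
def PiecewiseSLSol (q : ℝ → ℝ) (N : ℕ) (b : ℕ → ℝ) (γ η : ℕ → ℝ) (lam : ℂ)
    (y y' : ℕ → ℝ → ℂ) : Prop :=
  (∀ j, 1 ≤ j → j ≤ N → ∀ x ∈ Icc (b (j - 1)) (b j),
      y j x = y j (b (j - 1)) + ∫ t in (b (j - 1))..x, y' j t) ∧
  (∀ j, 1 ≤ j → j ≤ N → ∀ x ∈ Icc (b (j - 1)) (b j),
      y' j x = y' j (b (j - 1)) + ∫ t in (b (j - 1))..x, ((q t : ℂ) - lam) * y j t) ∧
  (∀ j, 1 ≤ j → j ≤ N - 1 →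
      y (j + 1) (b j) = (γ j : ℂ) * y j (b j) ∧
      y' (j + 1) (b j) = ((γ j : ℂ))⁻¹ * y' j (b j) + (η j : ℂ) * y j (b j))

/-! ### Absolute continuity and the integral form of Gronwall's inequality -/

lemma absCont_of_dist_le {E F : Type*} [PseudoMetricSpace E] [PseudoMetricSpace F]
    {f : ℝ → E} {g : ℝ → F} {a b : ℝ} (hg : AbsolutelyContinuousOnInterval g a b)
    (hfg : ∀ x ∈ uIcc a b, ∀ y ∈ uIcc a b, dist (f x) (f y) ≤ dist (g x) (g y)) :
    AbsolutelyContinuousOnInterval f a b := by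
  rw [absolutelyContinuousOnInterval_iff] at hg ⊢
  intro ε hε
  obtain ⟨δ, hδ, H⟩ := hg ε hε
  refine ⟨δ, hδ, fun E hE hlen => lt_of_le_of_lt ?_ (H E hE hlen)⟩
  refine Finset.sum_le_sum fun i hi => ?_
  exact hfg _ (hE.1 i hi).1 _ (hE.1 i hi).2

lemma absCont_const_add_integral {f : ℝ → ℂ} {a b : ℝ} (c : ℂ)
    (hf : IntervalIntegrable f volume a b) :
    AbsolutelyContinuousOnInterval (fun x => c + ∫ t in a..x, f t) a b := by
  refine absCont_of_dist_le
    (hf.norm.absolutelyContinuousOnInterval_intervalIntegral left_mem_uIcc) ?_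
  intro x hx y hy
  have sub : ∀ z ∈ uIcc a b, uIcc a z ⊆ uIcc a b := fun z hz =>
    uIcc_subset_uIcc left_mem_uIcc hz
  rw [dist_add_left, dist_eq_norm, Real.dist_eq,
    intervalIntegral.integral_interval_sub_left (hf.mono_set (sub x hx)) (hf.mono_set (sub y hy)),
    intervalIntegral.integral_interval_sub_left (hf.norm.mono_set (sub x hx))
      (hf.norm.mono_set (sub y hy))]
  exact intervalIntegral.norm_integral_le_abs_integral_norm

/-- Gronwall's inequality in integral form, with a kernel that is merely integrable. The function
`(c + ∫ k w) * exp (-∫ k)` is absolutely continuous with almost everywhere nonpositive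
derivative. -/
lemma gronwall_integrable {a b c : ℝ} (hab : a ≤ b) {k w : ℝ → ℝ}
    (hk : IntervalIntegrable k volume a b) (hk0 : ∀ x, 0 ≤ k x)
    (hw : ContinuousOn w (Icc a b))
    (h : ∀ x ∈ Icc a b, w x ≤ c + ∫ t in a..x, k t * w t) :
    w b ≤ c * Real.exp (∫ t in a..b, k t) := by
  have hu : uIcc a b = Icc a b := uIcc_of_le hab
  have hkw : IntervalIntegrable (fun t => k t * w t) volume a b :=
    hk.mul_continuousOn (hu ▸ hw)
  set K : ℝ → ℝ := fun x => ∫ t in a..x, k t with hK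
  set G : ℝ → ℝ := fun x => ∫ t in a..x, k t * w t with hG
  have hKac : AbsolutelyContinuousOnInterval K a b :=
    hk.absolutelyContinuousOnInterval_intervalIntegral left_mem_uIcc
  have hGac : AbsolutelyContinuousOnInterval (fun x => c + G x) a b :=
    absCont_of_dist_le (hkw.absolutelyContinuousOnInterval_intervalIntegral left_mem_uIcc)
      (fun x _ y _ => by rw [dist_add_left])
  have hKnn : ∀ x ∈ Icc a b, 0 ≤ K x := fun x hx =>
    intervalIntegral.integral_nonneg hx.1 fun t _ => hk0 t
  have hexp : ∀ x y : ℝ, 0 ≤ x → x ≤ y → |Real.exp (-x) - Real.exp (-y)| ≤ |x - y| := by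
    intro x y hx hxy
    have h1 : Real.exp (-y) ≤ Real.exp (-x) := Real.exp_le_exp.2 (by linarith)
    have h2 : Real.exp (-y) = Real.exp (-x) * Real.exp (x - y) := by
      rw [← Real.exp_add]; ring_nf
    have h3 : x - y + 1 ≤ Real.exp (x - y) := Real.add_one_le_exp _
    have h4 : Real.exp (-x) ≤ 1 := Real.exp_le_one_iff.2 (by linarith)
    have h5 : 0 < Real.exp (-x) := Real.exp_pos _
    rw [abs_of_nonneg (by linarith), abs_of_nonpos (by linarith)]
    rw [h2]
    nlinarith
  have hEac : AbsolutelyContinuousOnInterval (fun x => Real.exp (-K x)) a b := by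
    refine absCont_of_dist_le hKac fun x hx y hy => ?_
    rw [hu] at hx hy
    rw [Real.dist_eq, Real.dist_eq]
    rcases le_total (K x) (K y) with hxy | hxy
    · exact hexp _ _ (hKnn x hx) hxy
    · rw [abs_sub_comm, abs_sub_comm (K x)]
      exact hexp _ _ (hKnn y hy) hxy
  have hP := (hGac.fun_mul hEac).integral_deriv_eq_sub
  have hle : ∫ x in a..b, deriv (fun x => (c + G x) * Real.exp (-K x)) x ≤ 0 := by
    rw [intervalIntegral.integral_of_le hab]
    refine setIntegral_nonpos_ae measurableSet_Ioc ?_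
    filter_upwards [hk.ae_hasDerivAt_integral, hkw.ae_hasDerivAt_integral] with x h1 h2 hx
    have hx' : x ∈ Icc a b := Ioc_subset_Icc_self hx
    have hdK : HasDerivAt K (k x) x := h1 (hu ▸ hx') a left_mem_uIcc
    have hdG : HasDerivAt G (k x * w x) x := h2 (hu ▸ hx') a left_mem_uIcc
    have hd := (hdG.const_add c).fun_mul hdK.fun_neg.exp
    rw [hd.deriv]
    have hwx : w x ≤ c + G x := h x hx'
    have := mul_nonneg (mul_nonneg (hk0 x) (sub_nonneg.2 hwx)) (Real.exp_pos (-K x)).le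
    nlinarith
  rw [hP] at hle
  have hKa : K a = 0 := intervalIntegral.integral_same
  have hGa : G a = 0 := intervalIntegral.integral_same
  simp only [hKa, hGa, add_zero, neg_zero, Real.exp_zero, mul_one] at hle
  have h1 : (c + G b) * Real.exp (-K b) ≤ c := by linarith
  calc w b ≤ c + G b := h b (right_mem_Icc.2 hab)
    _ = (c + G b) * Real.exp (-K b) * Real.exp (K b) := by
        rw [mul_assoc, ← Real.exp_add]; simp
    _ ≤ c * Real.exp (K b) := by gcongr

/-! ### The first-order system on one subinterval -/

/-- The pair `(u, v)` satisfies the integrated system `u' = v`, `v' = p u` on `[a, b]`. As in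
`PiecewiseSLSol`, integrability of `v` and `p u` is not part of the definition (a non-integrable
integrand contributes the value `0`); `IsPiece.continuousOn` shows that it is automatic. -/
def IsPiece (p : ℝ → ℂ) (a b : ℝ) (u v : ℝ → ℂ) : Prop :=
  (∀ x ∈ Icc a b, u x = u a + ∫ t in a..x, v t) ∧
  (∀ x ∈ Icc a b, v x = v a + ∫ t in a..x, p t * u t)

lemma IsPiece.mono {p u v : ℝ → ℂ} {a b x : ℝ} (hp : IsPiece p a b u v) (hx : x ≤ b) :
    IsPiece p a x u v :=
  ⟨fun y hy => hp.1 y ⟨hy.1, hy.2.trans hx⟩, fun y hy => hp.2 y ⟨hy.1, hy.2.trans hx⟩⟩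

/-- A function given by a primitive, `f = f a + ∫ g` with `g` integrable, is continuous. -/
lemma continuousOn_of_eq_integral {f g : ℝ → ℂ} {a b : ℝ} (hab : a ≤ b)
    (hg : IntervalIntegrable g volume a b)
    (h : ∀ x ∈ Icc a b, f x = f a + ∫ t in a..x, g t) : ContinuousOn f (Icc a b) := by
  have := (absCont_const_add_integral (f a) hg).continuousOn
  rw [uIcc_of_le hab] at this
  exact this.congr h

lemma IsPiece.norm_le {p u v : ℝ → ℂ} {a b : ℝ} (hab : a ≤ b)
    (hint : IntervalIntegrable p volume a b) (hp : IsPiece p a b u v)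
    (hu : ContinuousOn u (Icc a b)) (hv : ContinuousOn v (Icc a b)) :
    ‖u b‖ + ‖v b‖ ≤ (‖u a‖ + ‖v a‖) * Real.exp (∫ t in a..b, (1 + ‖p t‖)) := by
  have hk : IntervalIntegrable (fun t => 1 + ‖p t‖) volume a b :=
    intervalIntegrable_const.add hint.norm
  refine gronwall_integrable (w := fun t => ‖u t‖ + ‖v t‖) hab hk (fun t => by positivity)
    (hu.norm.add hv.norm) fun x hx => ?_
  have hsub : uIcc a x ⊆ uIcc a b := by
    rw [uIcc_of_le hab, uIcc_of_le hx.1]; exact Icc_subset_Icc_right hx.2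
  have hu' : ContinuousOn u (uIcc a x) := hu.mono (hsub.trans (uIcc_of_le hab).le)
  have hv' : ContinuousOn v (uIcc a x) := hv.mono (hsub.trans (uIcc_of_le hab).le)
  have hpx : IntervalIntegrable p volume a x := hint.mono_set hsub
  have iv : IntervalIntegrable (fun t => ‖v t‖) volume a x := hv'.norm.intervalIntegrable
  have ipu : IntervalIntegrable (fun t => ‖p t * u t‖) volume a x :=
    (hpx.mul_continuousOn hu').norm
  have iw : IntervalIntegrable (fun t => (1 + ‖p t‖) * (‖u t‖ + ‖v t‖)) volume a x :=
    (hk.mono_set hsub).mul_continuousOn (hu'.norm.add hv'.norm)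
  have h1 : ‖u x‖ ≤ ‖u a‖ + ∫ t in a..x, ‖v t‖ := by
    rw [hp.1 x hx]
    exact (norm_add_le _ _).trans
      (by gcongr; exact intervalIntegral.norm_integral_le_integral_norm hx.1)
  have h2 : ‖v x‖ ≤ ‖v a‖ + ∫ t in a..x, ‖p t * u t‖ := by
    rw [hp.2 x hx]
    exact (norm_add_le _ _).trans
      (by gcongr; exact intervalIntegral.norm_integral_le_integral_norm hx.1)
  have h3 : (∫ t in a..x, ‖v t‖) + ∫ t in a..x, ‖p t * u t‖ ≤
      ∫ t in a..x, (1 + ‖p t‖) * (‖u t‖ + ‖v t‖) := by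
    rw [← intervalIntegral.integral_add iv ipu]
    refine intervalIntegral.integral_mono_on hx.1 (iv.add ipu) iw fun t _ => ?_
    rw [norm_mul]
    nlinarith [norm_nonneg (u t), norm_nonneg (v t), norm_nonneg (p t),
      mul_nonneg (norm_nonneg (p t)) (norm_nonneg (v t))]
  linarith

/-- Let `I` be an initial segment of `[a, b]`. If `f` is bounded on `I`, continuous on `[a, x]` for
every `x` in `I`, and equal to `f a` off `I`, then the product of `f` with an integrable function is
integrable. -/
lemma intervalIntegrable_mul_of_split {f p : ℝ → ℂ} {a b M : ℝ} (hab : a ≤ b) {I : Set ℝ}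
    (hI : ∀ x ∈ I, ∀ y ∈ Icc a x, y ∈ I) (hIab : I ⊆ Icc a b)
    (hc : ∀ x ∈ I, ContinuousOn f (Icc a x)) (hM : ∀ x ∈ I, ‖f x‖ ≤ M)
    (hoff : ∀ x ∈ Icc a b, x ∉ I → f x = f a)
    (hp : IntervalIntegrable p volume a b) :
    IntervalIntegrable (fun t => p t * f t) volume a b := by
  have hord : OrdConnected I := ⟨fun x hx y hy z hz =>
    hI y hy z ⟨(hIab hx).1.trans hz.1, hz.2⟩⟩
  have hIm : MeasurableSet I := hord.measurableSet
  rw [intervalIntegrable_iff_integrableOn_Icc_of_le hab] at hp ⊢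
  have hsplit : Icc a b = I ∪ (Icc a b \ I) := (union_sdiff_cancel hIab).symm
  have hfc : ContinuousOn f I := by
    -- near a point of `I`, the set `I` agrees with some `[a, y]`
    intro x hx
    by_cases hmax : ∃ y ∈ I, x < y
    · obtain ⟨y, hy, hxy⟩ := hmax
      have h1 : ContinuousWithinAt f (Icc a y) x := hc y hy x ⟨(hIab hx).1, hxy.le⟩
      refine h1.mono_of_mem_nhdsWithin ?_
      filter_upwards [self_mem_nhdsWithin, mem_nhdsWithin_of_mem_nhds (Iio_mem_nhds hxy)]
        with z hz hz'
      exact ⟨(hIab hz).1, le_of_lt hz'⟩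
    · push Not at hmax
      exact (hc x hx x ⟨(hIab hx).1, le_rfl⟩).mono fun z hz => ⟨(hIab hz).1, hmax z hz⟩
  have hmeas : AEStronglyMeasurable f (volume.restrict (Icc a b)) := by
    rw [hsplit, aestronglyMeasurable_union_iff]
    refine ⟨hfc.aestronglyMeasurable hIm, ?_⟩
    refine (aestronglyMeasurable_const (b := f a)).congr ?_
    filter_upwards [ae_restrict_mem (measurableSet_Icc.diff hIm)] with t ht
    exact (hoff t ht.1 ht.2).symm
  refine Integrable.mul_bdd (c := max M ‖f a‖) hp hmeas ?_
  filter_upwards [ae_restrict_mem measurableSet_Icc] with t ht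
  by_cases htI : t ∈ I
  · exact (hM t htI).trans (le_max_left _ _)
  · rw [hoff t ht htI]; exact le_max_right _ _

/-- Both components of a solution are continuous. The only danger is that `v` or `p u` fails to be
integrable from some point on. Take the smaller of the two initial segments on which these
functions are integrable: Gronwall bounds the solution there, and beyond it the corresponding
component is constant, hence that component is bounded throughout and everything is integrable. -/
lemma IsPiece.continuousOn {p u v : ℝ → ℂ} {a b : ℝ} (hab : a ≤ b)
    (hint : IntervalIntegrable p volume a b) (hp : IsPiece p a b u v) :
    ContinuousOn u (Icc a b) ∧ ContinuousOn v (Icc a b) := by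
  set I : Set ℝ := {x | x ∈ Icc a b ∧ IntervalIntegrable v volume a x} with hIdef
  set J : Set ℝ := {x | x ∈ Icc a b ∧ IntervalIntegrable (fun t => p t * u t) volume a x}
    with hJdef
  have hsub : ∀ x, ∀ y ∈ Icc a x, uIcc a y ⊆ uIcc a x := fun x y hy => by
    rw [uIcc_of_le hy.1, uIcc_of_le (hy.1.trans hy.2)]; exact Icc_subset_Icc_right hy.2
  have hI : ∀ x ∈ I, ∀ y ∈ Icc a x, y ∈ I := fun x hx y hy =>
    ⟨⟨hy.1, hy.2.trans hx.1.2⟩, hx.2.mono_set (hsub x y hy)⟩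
  have hJ : ∀ x ∈ J, ∀ y ∈ Icc a x, y ∈ J := fun x hx y hy =>
    ⟨⟨hy.1, hy.2.trans hx.1.2⟩, hx.2.mono_set (hsub x y hy)⟩
  have hcu : ∀ x ∈ I, ContinuousOn u (Icc a x) := fun x hx =>
    continuousOn_of_eq_integral hx.1.1 hx.2 (hp.mono hx.1.2).1
  have hcv : ∀ x ∈ J, ContinuousOn v (Icc a x) := fun x hx =>
    continuousOn_of_eq_integral hx.1.1 hx.2 (hp.mono hx.1.2).2
  set k : ℝ → ℝ := fun t => 1 + ‖p t‖
  set M : ℝ := (‖u a‖ + ‖v a‖) * Real.exp (∫ t in a..b, k t) with hMdef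
  have hM : ∀ x ∈ I, x ∈ J → ‖u x‖ + ‖v x‖ ≤ M := by
    intro x hxI hxJ
    have hk : IntervalIntegrable k volume a b := intervalIntegrable_const.add hint.norm
    refine ((hp.mono hxI.1.2).norm_le hxI.1.1 (hint.mono_set ?_) (hcu x hxI)
      (hcv x hxJ)).trans ?_
    · rw [uIcc_of_le hxI.1.1, uIcc_of_le hab]; exact Icc_subset_Icc_right hxI.1.2
    · refine mul_le_mul_of_nonneg_left (Real.exp_le_exp.2 ?_) (by positivity)
      refine intervalIntegral.integral_mono_interval le_rfl hxI.1.1 hxI.1.2 ?_ hk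
      exact Filter.Eventually.of_forall fun t => by
        simp only [Pi.zero_apply]; positivity
  have hoffI : ∀ x ∈ Icc a b, x ∉ I → u x = u a := fun x hx hxI => by
    rw [hp.1 x hx, intervalIntegral.integral_undef fun h => hxI ⟨hx, h⟩, add_zero]
  have hoffJ : ∀ x ∈ Icc a b, x ∉ J → v x = v a := fun x hx hxJ => by
    rw [hp.2 x hx, intervalIntegral.integral_undef fun h => hxJ ⟨hx, h⟩, add_zero]
  have hbb : b ∈ Icc a b := right_mem_Icc.2 hab
  have htot : I ⊆ J ∨ J ⊆ I := by
    by_contra! hcon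
    obtain ⟨⟨x, hxI, hxJ⟩, ⟨y, hyJ, hyI⟩⟩ := And.imp not_subset.1 not_subset.1 hcon
    rcases le_total x y with hxy | hxy
    · exact hxJ (hJ y hyJ x ⟨hxI.1.1, hxy⟩)
    · exact hyI (hI x hxI y ⟨hyJ.1.1, hxy⟩)
  rcases htot with hIJ | hJI
  · have hpu : IntervalIntegrable (fun t => p t * u t) volume a b :=
      intervalIntegrable_mul_of_split (M := M) hab hI (fun x hx => hx.1) hcu
        (fun x hx => by linarith [hM x hx (hIJ hx), norm_nonneg (v x)]) hoffI hint
    have hv := hcv b ⟨hbb, hpu⟩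
    have hvi : IntervalIntegrable v volume a b :=
      ContinuousOn.intervalIntegrable (by rwa [uIcc_of_le hab])
    exact ⟨hcu b ⟨hbb, hvi⟩, hv⟩
  · have hvi : IntervalIntegrable (fun t => (1 : ℂ) * v t) volume a b :=
      intervalIntegrable_mul_of_split (p := fun _ => 1) (M := M) hab hJ (fun x hx => hx.1) hcv
        (fun x hx => by linarith [hM x (hJI hx) hx, norm_nonneg (u x)]) hoffJ
        intervalIntegrable_const
    simp only [one_mul] at hvi
    have hu := hcu b ⟨hbb, hvi⟩
    have hpu : IntervalIntegrable (fun t => p t * u t) volume a b :=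
      hint.mul_continuousOn (by rwa [uIcc_of_le hab])
    exact ⟨hu, hcv b ⟨hbb, hpu⟩⟩

lemma IsPiece.intervalIntegrable {p u v : ℝ → ℂ} {a b : ℝ} (hab : a ≤ b)
    (hint : IntervalIntegrable p volume a b) (hp : IsPiece p a b u v) :
    IntervalIntegrable v volume a b ∧ IntervalIntegrable (fun t => p t * u t) volume a b := by
  obtain ⟨hu, hv⟩ := hp.continuousOn hab hint
  rw [← uIcc_of_le hab] at hu hv
  exact ⟨hv.intervalIntegrable, hint.mul_continuousOn hu⟩

lemma IsPiece.linear_combination {p u₁ v₁ u₂ v₂ : ℝ → ℂ} {a b : ℝ} (hab : a ≤ b)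
    (hint : IntervalIntegrable p volume a b) (h₁ : IsPiece p a b u₁ v₁)
    (h₂ : IsPiece p a b u₂ v₂) (c d : ℂ) :
    IsPiece p a b (fun x => c * u₁ x + d * u₂ x) (fun x => c * v₁ x + d * v₂ x) := by
  obtain ⟨i₁, j₁⟩ := h₁.intervalIntegrable hab hint
  obtain ⟨i₂, j₂⟩ := h₂.intervalIntegrable hab hint
  have hsub : ∀ x ∈ Icc a b, uIcc a x ⊆ uIcc a b := fun x hx => by
    rw [uIcc_of_le hx.1, uIcc_of_le hab]; exact Icc_subset_Icc_right hx.2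
  refine ⟨fun x hx => ?_, fun x hx => ?_⟩
  · rw [intervalIntegral.integral_add ((i₁.mono_set (hsub x hx)).const_mul c)
      ((i₂.mono_set (hsub x hx)).const_mul d), intervalIntegral.integral_const_mul,
      intervalIntegral.integral_const_mul]
    linear_combination c * h₁.1 x hx + d * h₂.1 x hx
  · have : (fun t => p t * (c * u₁ t + d * u₂ t)) =
        fun t => c * (p t * u₁ t) + d * (p t * u₂ t) := by funext t; ring
    rw [this, intervalIntegral.integral_add ((j₁.mono_set (hsub x hx)).const_mul c)
      ((j₂.mono_set (hsub x hx)).const_mul d), intervalIntegral.integral_const_mul,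
      intervalIntegral.integral_const_mul]
    linear_combination c * h₁.2 x hx + d * h₂.2 x hx

lemma IsPiece.eq_zero {p u v : ℝ → ℂ} {a b : ℝ} (hint : IntervalIntegrable p volume a b)
    (hp : IsPiece p a b u v) (hu : u a = 0) (hv : v a = 0) :
    ∀ x ∈ Icc a b, u x = 0 ∧ v x = 0 := by
  intro x hx
  have hi : IntervalIntegrable p volume a x := hint.mono_set (by
    rw [uIcc_of_le hx.1, uIcc_of_le (hx.1.trans hx.2)]; exact Icc_subset_Icc_right hx.2)
  have hpx := hp.mono hx.2
  obtain ⟨cu, cv⟩ := hpx.continuousOn hx.1 hi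
  have := hpx.norm_le hx.1 hi cu cv
  simp only [hu, hv, norm_zero, add_zero, zero_mul] at this
  exact ⟨norm_le_zero_iff.1 (by linarith [norm_nonneg (v x)]),
    norm_le_zero_iff.1 (by linarith [norm_nonneg (u x)])⟩

/-- The Wronskian takes the same value at both ends of the interval: it is absolutely continuous
with almost everywhere vanishing derivative. -/
lemma IsPiece.wronskian_eq {p u₁ v₁ u₂ v₂ : ℝ → ℂ} {a b : ℝ} (hab : a ≤ b)
    (hint : IntervalIntegrable p volume a b) (h₁ : IsPiece p a b u₁ v₁)
    (h₂ : IsPiece p a b u₂ v₂) :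
    u₁ b * v₂ b - v₁ b * u₂ b = u₁ a * v₂ a - v₁ a * u₂ a := by
  obtain ⟨i₁, j₁⟩ := h₁.intervalIntegrable hab hint
  obtain ⟨i₂, j₂⟩ := h₂.intervalIntegrable hab hint
  have hu : uIcc a b = Icc a b := uIcc_of_le hab
  -- globally defined primitives, so that two-sided derivatives make sense
  set U₁ : ℝ → ℂ := fun x => u₁ a + ∫ t in a..x, v₁ t with hU₁
  set V₁ : ℝ → ℂ := fun x => v₁ a + ∫ t in a..x, p t * u₁ t with hV₁
  set U₂ : ℝ → ℂ := fun x => u₂ a + ∫ t in a..x, v₂ t with hU₂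
  set V₂ : ℝ → ℂ := fun x => v₂ a + ∫ t in a..x, p t * u₂ t with hV₂
  have q₁ : ∀ x ∈ Icc a b, U₁ x = u₁ x := fun x hx => (h₁.1 x hx).symm
  have r₁ : ∀ x ∈ Icc a b, V₁ x = v₁ x := fun x hx => (h₁.2 x hx).symm
  have q₂ : ∀ x ∈ Icc a b, U₂ x = u₂ x := fun x hx => (h₂.1 x hx).symm
  have r₂ : ∀ x ∈ Icc a b, V₂ x = v₂ x := fun x hx => (h₂.2 x hx).symm
  have hac : AbsolutelyContinuousOnInterval (U₁ • V₂ - V₁ • U₂) a b :=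
    ((absCont_const_add_integral _ i₁).smul (absCont_const_add_integral _ j₂)).sub
      ((absCont_const_add_integral _ j₁).smul (absCont_const_add_integral _ i₂))
  obtain ⟨c, hc⟩ := hac.const_of_ae_hasDerivAt_zero (by
    filter_upwards [i₁.ae_hasDerivAt_integral, j₁.ae_hasDerivAt_integral,
      i₂.ae_hasDerivAt_integral, j₂.ae_hasDerivAt_integral] with x d₁ e₁ d₂ e₂ hx
    have D₁ : HasDerivAt U₁ (v₁ x) x := (d₁ hx a left_mem_uIcc).const_add _
    have E₁ : HasDerivAt V₁ (p x * u₁ x) x := (e₁ hx a left_mem_uIcc).const_add _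
    have D₂ : HasDerivAt U₂ (v₂ x) x := (d₂ hx a left_mem_uIcc).const_add _
    have E₂ : HasDerivAt V₂ (p x * u₂ x) x := (e₂ hx a left_mem_uIcc).const_add _
    have hd := (D₁.mul E₂).sub (E₁.mul D₂)
    rw [hu] at hx
    rw [q₁ x hx, r₁ x hx, q₂ x hx, r₂ x hx] at hd
    convert! hd using 1
    ring)
  have ha := hc a left_mem_uIcc
  have hb := hc b right_mem_uIcc
  have hbb : b ∈ Icc a b := right_mem_Icc.2 hab
  have haa : a ∈ Icc a b := left_mem_Icc.2 hab
  simp only [Pi.sub_apply, smul_eq_mul, Pi.mul_apply] at ha hb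
  rw [q₁ b hbb, q₂ b hbb, r₁ b hbb, r₂ b hbb] at hb
  rw [q₁ a haa, q₂ a haa, r₁ a haa, r₂ a haa] at ha
  exact hb.trans ha.symm

/-! ### Propagation through the discontinuities -/

lemma PiecewiseSLSol.isPiece {q : ℝ → ℝ} {N : ℕ} {b γ η : ℕ → ℝ} {lam : ℂ} {y y' : ℕ → ℝ → ℂ}
    (hy : PiecewiseSLSol q N b γ η lam y y') {j : ℕ} (h1 : 1 ≤ j) (hj : j ≤ N) :
    IsPiece (fun t => (q t : ℂ) - lam) (b (j - 1)) (b j) (y j) (y' j) :=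
  ⟨hy.1 j h1 hj, hy.2.1 j h1 hj⟩

/-- The initial data at `b 0` determine a piecewise solution, stated for zero data. -/
lemma PiecewiseSLSol.eq_zero {q : ℝ → ℝ} {N : ℕ} {b γ η : ℕ → ℝ} {lam : ℂ} {y y' : ℕ → ℝ → ℂ}
    (hle : ∀ j, 1 ≤ j → j ≤ N → b (j - 1) ≤ b j)
    (hint : ∀ j, 1 ≤ j → j ≤ N →
      IntervalIntegrable (fun t => (q t : ℂ) - lam) volume (b (j - 1)) (b j))
    (hy : PiecewiseSLSol q N b γ η lam y y') (h0 : y 1 (b 0) = 0) (h0' : y' 1 (b 0) = 0) :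
    ∀ j, 1 ≤ j → j ≤ N → ∀ x ∈ Icc (b (j - 1)) (b j), y j x = 0 ∧ y' j x = 0 := by
  intro j h1
  induction j, h1 using Nat.le_induction with
  | base => exact fun hj => (hy.isPiece le_rfl hj).eq_zero (hint 1 le_rfl hj) h0 h0'
  | succ j h1 ih =>
    intro hj
    obtain ⟨e1, e2⟩ := ih (by omega) (b j) (right_mem_Icc.2 (hle j h1 (by omega)))
    obtain ⟨j1, j2⟩ := hy.2.2 j h1 (by omega)
    refine (hy.isPiece (by omega) hj).eq_zero (hint (j + 1) (by omega) hj) ?_ ?_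
    · simpa [e1] using j1
    · simpa [e1, e2] using j2

/-- The jump matrices have determinant `1`, so the Wronskian is the same at `b 0` and at the right
end of every piece. -/
lemma PiecewiseSLSol.wronskian_eq {q : ℝ → ℝ} {N : ℕ} {b γ η : ℕ → ℝ} {lam : ℂ}
    {y y' z z' : ℕ → ℝ → ℂ}
    (hle : ∀ j, 1 ≤ j → j ≤ N → b (j - 1) ≤ b j)
    (hint : ∀ j, 1 ≤ j → j ≤ N →
      IntervalIntegrable (fun t => (q t : ℂ) - lam) volume (b (j - 1)) (b j))
    (hγ : ∀ j, 1 ≤ j → j ≤ N - 1 → 0 < γ j)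
    (hy : PiecewiseSLSol q N b γ η lam y y') (hz : PiecewiseSLSol q N b γ η lam z z') :
    ∀ j, 1 ≤ j → j ≤ N → y j (b j) * z' j (b j) - y' j (b j) * z j (b j) =
      y 1 (b 0) * z' 1 (b 0) - y' 1 (b 0) * z 1 (b 0) := by
  intro j h1
  induction j, h1 using Nat.le_induction with
  | base =>
    exact fun hj => (hy.isPiece le_rfl hj).wronskian_eq (hle 1 le_rfl hj) (hint 1 le_rfl hj)
      (hz.isPiece le_rfl hj)
  | succ j h1 ih =>
    intro hj
    rw [← ih (by omega), (hy.isPiece (by omega) hj).wronskian_eq (hle (j + 1) (by omega) hj)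
      (hint (j + 1) (by omega) hj) (hz.isPiece (by omega) hj)]
    obtain ⟨j1, j2⟩ := hy.2.2 j h1 (by omega)
    obtain ⟨k1, k2⟩ := hz.2.2 j h1 (by omega)
    have hg : (γ j : ℂ) ≠ 0 := by exact_mod_cast (hγ j h1 (by omega)).ne'
    simp only [Nat.add_sub_cancel]
    rw [j1, j2, k1, k2]
    field_simp
    ring

lemma PiecewiseSLSol.linear_combination {q : ℝ → ℝ} {N : ℕ} {b γ η : ℕ → ℝ} {lam : ℂ}
    {y y' z z' : ℕ → ℝ → ℂ}
    (hle : ∀ j, 1 ≤ j → j ≤ N → b (j - 1) ≤ b j)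
    (hint : ∀ j, 1 ≤ j → j ≤ N →
      IntervalIntegrable (fun t => (q t : ℂ) - lam) volume (b (j - 1)) (b j))
    (hy : PiecewiseSLSol q N b γ η lam y y') (hz : PiecewiseSLSol q N b γ η lam z z') (c d : ℂ) :
    PiecewiseSLSol q N b γ η lam (fun j x => c * y j x + d * z j x)
      (fun j x => c * y' j x + d * z' j x) := by
  have key : ∀ j (h1 : 1 ≤ j) (hj : j ≤ N), IsPiece (fun t => (q t : ℂ) - lam) (b (j - 1)) (b j)
      (fun x => c * y j x + d * z j x) (fun x => c * y' j x + d * z' j x) := fun j h1 hj =>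
    (hy.isPiece h1 hj).linear_combination (hle j h1 hj) (hint j h1 hj) (hz.isPiece h1 hj) c d
  refine ⟨fun j h1 hj => (key j h1 hj).1, fun j h1 hj => (key j h1 hj).2, fun j h1 hj => ?_⟩
  obtain ⟨j1, j2⟩ := hy.2.2 j h1 hj
  obtain ⟨k1, k2⟩ := hz.2.2 j h1 hj
  constructor
  · linear_combination c * j1 + d * k1
  · linear_combination c * j2 + d * k2

/-- A homogeneous `2 × 2` system has a nontrivial solution iff its determinant vanishes. -/
lemma exists_ne_zero_iff_det_eq_zero (m₁₁ m₁₂ m₂₁ m₂₂ : ℂ) :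
    (∃ c d : ℂ, (c ≠ 0 ∨ d ≠ 0) ∧ m₁₁ * c + m₁₂ * d = 0 ∧ m₂₁ * c + m₂₂ * d = 0) ↔
      m₁₁ * m₂₂ - m₁₂ * m₂₁ = 0 := by
  have h := Matrix.exists_mulVec_eq_zero_iff (M := !![m₁₁, m₁₂; m₂₁, m₂₂])
  rw [Matrix.det_fin_two_of] at h
  rw [← h]
  constructor
  · rintro ⟨c, d, hne, h1, h2⟩
    refine ⟨![c, d], fun h0 => ?_, ?_⟩
    · have e0 := congrFun h0 0
      have e1 := congrFun h0 1
      simp at e0 e1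
      tauto
    · ext i
      fin_cases i <;> simpa [Matrix.mulVec, dotProduct, Fin.sum_univ_two]
  · rintro ⟨v, hv, hmv⟩
    refine ⟨v 0, v 1, ?_, ?_, ?_⟩
    · by_contra! h0
      exact hv (by ext i; fin_cases i <;> simp [h0.1, h0.2])
    · simpa [Matrix.mulVec, dotProduct, Fin.sum_univ_two] using congrFun hmv 0
    · simpa [Matrix.mulVec, dotProduct, Fin.sum_univ_two] using congrFun hmv 1

/-- λ is an eigenvalue of the quasi-periodic boundary value problem B
(there is a nontrivial piecewise solution satisfying the discontinuity conditions and
y(0) = α·y(T), y'(0) − h·y(0) = β·y'(T)) if and only if a(λ) = 0, where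
a(λ) = α·φ(T,λ) + β·S'(T,λ) − (1 + αβ) and φ = C + h·S. -/
theorem eigenvalue_iff_characteristic_function_zero
    (T : ℝ) (hT : 0 < T) (q : ℝ → ℝ) (hq : IntegrableOn q (Icc 0 T))
    (N : ℕ) (hN : 1 ≤ N) (b : ℕ → ℝ) (γ η : ℕ → ℝ) (h : ℝ)
    (hb0 : b 0 = 0) (hbN : b N = T)
    (hbmono : ∀ j < N, b j < b (j + 1))
    (hγ : ∀ j, 1 ≤ j → j ≤ N - 1 → 0 < γ j)
    (α β : ℝ) (hαβ : 0 < α * β)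
    (lam : ℂ) (S S' C C' : ℕ → ℝ → ℂ)
    (hS : PiecewiseSLSol q N b γ η lam S S')
    (hC : PiecewiseSLSol q N b γ η lam C C')
    (hS0 : S 1 0 = 0) (hS'0 : S' 1 0 = 1) (hC0 : C 1 0 = 1) (hC'0 : C' 1 0 = 0) :
    (∃ y y' : ℕ → ℝ → ℂ,
        PiecewiseSLSol q N b γ η lam y y' ∧
        y 1 0 = (α : ℂ) * y N T ∧
        y' 1 0 - (h : ℂ) * y 1 0 = (β : ℂ) * y' N T ∧
        ∃ j, 1 ≤ j ∧ j ≤ N ∧ ∃ x ∈ Icc (b (j - 1)) (b j), y j x ≠ 0)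
      ↔ (α : ℂ) * (C N T + (h : ℂ) * S N T) + (β : ℂ) * S' N T
          - (1 + (α : ℂ) * (β : ℂ)) = 0 := by
  have hle : ∀ j, 1 ≤ j → j ≤ N → b (j - 1) ≤ b j := fun j h1 hj => by
    obtain ⟨i, rfl⟩ := Nat.exists_eq_add_of_le' h1
    exact (hbmono i (by omega)).le
  have hnn : ∀ j, j ≤ N → 0 ≤ b j := by
    intro j
    induction j with
    | zero => intro _; exact hb0.ge
    | succ j ih => exact fun hj => (ih (by omega)).trans (hbmono j (by omega)).le
  have hleT : ∀ j, j ≤ N → b j ≤ T := by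
    intro j hj
    induction hj using Nat.decreasingInduction with
    | self => exact hbN.le
    | of_succ j hj ih => exact (hbmono j hj).le.trans ih
  have hint : ∀ j, 1 ≤ j → j ≤ N →
      IntervalIntegrable (fun t => (q t : ℂ) - lam) volume (b (j - 1)) (b j) := by
    intro j h1 hj
    have hqj : IntegrableOn q (Icc (b (j - 1)) (b j)) :=
      hq.mono_set (Icc_subset_Icc (hnn _ (by omega)) (hleT j hj))
    refine IntervalIntegrable.sub ?_ intervalIntegrable_const
    rw [intervalIntegrable_iff_integrableOn_Icc_of_le (hle j h1 hj)]
    exact hqj.ofReal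
  have hW : C N T * S' N T - C' N T * S N T = 1 := by
    have := hC.wronskian_eq hle hint hγ hS N hN le_rfl
    rw [hb0, hbN, hS0, hS'0, hC0, hC'0] at this
    simpa using this
  have hTN : T ∈ Icc (b (N - 1)) (b N) := ⟨hbN ▸ hle N hN le_rfl, hbN.ge⟩
  -- the boundary conditions for `c * C + d * S` form a linear system with matrix
  -- `[1 - α C(T), -α S(T); -h - β C'(T), 1 - β S'(T)]`
  have hdet : (α : ℂ) * (C N T + (h : ℂ) * S N T) + (β : ℂ) * S' N T
        - (1 + (α : ℂ) * (β : ℂ)) = 0 ↔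
      (1 - (α : ℂ) * C N T) * (1 - (β : ℂ) * S' N T)
        - (-((α : ℂ) * S N T)) * (-(h : ℂ) - (β : ℂ) * C' N T) = 0 := by
    constructor <;> intro H
    · linear_combination -H + (α : ℂ) * β * hW
    · linear_combination -H + (α : ℂ) * β * hW
  rw [hdet, ← exists_ne_zero_iff_det_eq_zero]
  constructor
  · rintro ⟨y, y', hy, hbc1, hbc2, j, h1, hj, x, hx, hne⟩
    have hz := (hC.linear_combination hle hint hS (y 1 0) (y' 1 0)).linear_combination
      hle hint hy 1 (-1)
    have hzero := hz.eq_zero hle hint (by simp [hb0, hC0, hS0]) (by simp [hb0, hC'0, hS'0])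
    obtain ⟨eN, eN'⟩ := hzero N hN le_rfl T hTN
    refine ⟨y 1 0, y' 1 0, ?_, ?_, ?_⟩
    · by_contra! h0
      have := (hzero j h1 hj x hx).1
      simp [h0.1, h0.2] at this
      exact hne this
    · linear_combination hbc1 - (α : ℂ) * eN
    · linear_combination hbc2 - (β : ℂ) * eN'
  · rintro ⟨c, d, hcd, e1, e2⟩
    have hy := hC.linear_combination hle hint hS c d
    refine ⟨_, _, hy, ?_, ?_, 1, le_rfl, hN, ?_⟩
    · simp only [hC0, hS0]
      linear_combination e1
    · simp only [hC0, hS0, hC'0, hS'0]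
      linear_combination e2
    · -- if `c * C + d * S` vanished on `[b 0, b 1]`, so would its derivative, whence `c = d = 0`
      by_contra! hzero
      have hb1 : 0 < b 1 := hb0 ▸ hbmono 0 (by omega)
      have hc : c = 0 := by
        simpa [hC0, hS0] using hzero 0 (by simp [hb0, hb1.le])
      have hp := hy.isPiece le_rfl hN
      simp only [Nat.sub_self, hb0] at hp hzero
      have hd' : ∀ x ∈ Icc 0 (b 1), c * C' 1 x + d * S' 1 x = d := by
        intro x hx
        have hv := hp.2 x hx
        beta_reduce at hv
        rw [hv, intervalIntegral.integral_congr (g := fun _ => 0)]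
        · simp [hC'0, hS'0]
        · intro t ht
          rw [uIcc_of_le hx.1] at ht
          simp [hzero t ⟨ht.1, ht.2.trans hx.2⟩]
      have hb1' : b 1 ∈ Icc 0 (b 1) := ⟨hb1.le, le_rfl⟩
      have hu := hp.1 (b 1) hb1'
      beta_reduce at hu
      rw [hzero _ hb1', hzero 0 ⟨le_rfl, hb1.le⟩,
        intervalIntegral.integral_congr (g := fun _ => d)] at hu
      · have hd : d = 0 := by simpa [hb1.ne'] using hu
        simp [hc, hd] at hcd
      · intro t ht
        rw [uIcc_of_le hb1.le] at ht
        exact hd' t ht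
end
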